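/- Let γ0, γ1 ∈ ℝ satisfy −1 < γ0, γ1 < 1 and γ1 > γ0 − 2 (the open asymptotic-data triangle). Suppose (w0, w1) is a smooth solution of the radial tt* system (case 4a) on (0, ∞) such that w0(r) → 0 and w1(r) → 0 as r → ∞ and 2·w0(r)/ln r → γ0 and 2·w1(r)/ln r → γ1 as r → 0⁺. Then the fine structure near r = 0 holds: lim_{r→0⁺} (2·w0(r) − γ0·ln r) = ρ0 and lim_{r→0⁺} (2·w1(r) − γ1·ln r) = ρ1, where ρ0 = −ln( 2^{2γ0} · Γ((1+γ0)/4)·Γ((4+γ0+γ1)/8)·Γ((6+γ0−γ1)/8) / ( Γ((3−γ0)/4)·Γ((4−γ0−γ1)/8)·Γ((2−γ0+γ1)/8) ) ) and ρ1 = −ln( 2^{2γ1} · Γ((3+γ1)/4)·Γ((4+γ0+γ1)/8)·Γ((2−γ0+γ1)/8) / ( Γ((1−γ1)/4)·Γ((4−γ0−γ1)/8)·Γ((6+γ0−γ1)/8) ) ). -/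

import Mathlib

open Real Filter

/-- The radial tt* system (case 4a). -/
def IsRadialTTStar (w0 w1 : ℝ → ℝ) : Prop :=
  ∀ r : ℝ, 0 < r →
    (1/2) * deriv (deriv w0) r + (1/(2*r)) * deriv w0 r
        = Real.exp (4 * w0 r) - Real.exp (2 * w1 r - 2 * w0 r) ∧
    (1/2) * deriv (deriv w1) r + (1/(2*r)) * deriv w1 r
        = Real.exp (2 * w1 r - 2 * w0 r) - Real.exp (-(4 * w1 r))

section Helpers
open Set Topology MeasureTheory

/-- Iterated Volterra integrals. -/
noncomputable def volt {E : Type*} [NormedAddCommGroup E] [NormedSpace ℝ E]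
    (B : ℝ → E →L[ℝ] E) (C : E) : ℕ → ℝ → E
  | 0 => fun _ => C
  | k+1 => fun t => ∫ s in (0:ℝ)..t, B s (volt B C k s)

set_option linter.unusedSectionVars false

section
variable {E : Type*} [NormedAddCommGroup E] [NormedSpace ℝ E] [CompleteSpace E]

theorem volt_cont (B : ℝ → E →L[ℝ] E) (hB : Continuous B) (C : E) (k : ℕ) :
    Continuous (volt B C k) := by
  induction k with
  | zero => exact continuous_const
  | succ k ih =>
    have : Continuous (fun s => B s (volt B C k s)) := hB.clm_apply ih
    exact intervalIntegral.continuous_primitive (fun a b => this.intervalIntegrable a b) 0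

theorem volt_deriv (B : ℝ → E →L[ℝ] E) (hB : Continuous B) (C : E) (k : ℕ) (t : ℝ) :
    HasDerivAt (volt B C (k+1)) (B t (volt B C k t)) t := by
  have : Continuous (fun s => B s (volt B C k s)) := hB.clm_apply (volt_cont B hB C k)
  exact intervalIntegral.integral_hasDerivAt_right (this.intervalIntegrable _ _)
    (this.stronglyMeasurableAtFilter _ _) this.continuousAt

theorem volt_bound (B : ℝ → E →L[ℝ] E) (hB : Continuous B) (C : E) (K T : ℝ) (hK : 0 ≤ K)
    (hKB : ∀ t ∈ Icc 0 T, ‖B t‖ ≤ K) (k : ℕ) :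
    ∀ t ∈ Icc 0 T, ‖volt B C k t‖ ≤ ‖C‖ * ((K * t)^k / (k.factorial : ℝ)) := by
  induction k with
  | zero => intro t ht; simp [volt]
  | succ k ih =>
    intro t ht
    have h1 : ‖volt B C (k+1) t‖ ≤ ∫ s in (0:ℝ)..t, K * (‖C‖ * ((K * s)^k / (k.factorial : ℝ))) := by
      apply intervalIntegral.norm_integral_le_of_norm_le ht.1
      · refine Eventually.of_forall fun s hs => ?_
        have hs' : s ∈ Icc 0 T := ⟨hs.1.le, hs.2.trans ht.2⟩
        exact ((B s).le_opNorm _).trans (mul_le_mul (hKB s hs') (ih s hs') (norm_nonneg _) hK)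
      · exact Continuous.intervalIntegrable (by fun_prop) _ _
    have h2 : ∫ s in (0:ℝ)..t, K * (‖C‖ * ((K * s)^k / (k.factorial : ℝ)))
        = ‖C‖ * ((K * t)^(k+1) / ((k+1).factorial : ℝ)) := by
      have : ∀ s : ℝ, K * (‖C‖ * ((K * s)^k / (k.factorial : ℝ)))
          = (‖C‖ * K^(k+1) / (k.factorial : ℝ)) * s^k := by intro s; rw [mul_pow]; ring
      simp_rw [this]
      rw [intervalIntegral.integral_const_mul, integral_pow, Nat.factorial_succ]
      have : (k.factorial : ℝ) ≠ 0 := by positivity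
      push_cast
      field_simp
      rw [mul_pow]
      ring_nf
    exact h1.trans h2.le

theorem lin_exists (B : ℝ → E →L[ℝ] E) (hB : Continuous B) (C : E) :
    ∃ X : ℝ → E, X 0 = C ∧ ContinuousWithinAt X (Ici 0) 0 ∧
      ∀ t > 0, HasDerivAt X (B t (X t)) t := by
  have hbd : ∀ T : ℝ, ∃ K, 0 ≤ K ∧ ∀ t ∈ Icc 0 T, ‖B t‖ ≤ K := by
    intro T
    obtain ⟨K, hK⟩ := (isCompact_Icc (a := (0:ℝ)) (b := T)).exists_bound_of_continuousOn hB.continuousOn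
    exact ⟨max K 0, le_max_right _ _, fun t ht => (hK t ht).trans (le_max_left _ _)⟩
  have hsumm : ∀ c x : ℝ, Summable (fun k : ℕ => c * (x^k / (k.factorial : ℝ))) := fun c x =>
    (Real.summable_pow_div_factorial x).mul_left c
  have hle : ∀ T K : ℝ, 0 ≤ K → (∀ t ∈ Icc 0 T, ‖B t‖ ≤ K) → ∀ k, ∀ t ∈ Icc 0 T,
      ‖volt B C k t‖ ≤ ‖C‖ * ((K * T)^k / (k.factorial : ℝ)) := by
    intro T K hK h k t ht
    refine (volt_bound B hB C K T hK h k t ht).trans ?_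
    have := ht.1
    have := ht.2
    gcongr
  have hsummX : ∀ t, 0 ≤ t → Summable (fun k => volt B C k t) := by
    intro t ht
    obtain ⟨K, hK, hKB⟩ := hbd t
    exact Summable.of_norm_bounded (hsumm _ (K*t)) (fun k => hle t K hK hKB k t ⟨ht, le_rfl⟩)
  refine ⟨fun t => ∑' k, volt B C k t, ?_, ?_, ?_⟩
  · have : ∀ k, k ≠ 0 → volt B C k 0 = 0 := by
      intro k hk
      obtain ⟨m, rfl⟩ := Nat.exists_eq_succ_of_ne_zero hk
      simp [volt]
    show ∑' k, volt B C k 0 = C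
    rw [tsum_eq_single 0 this]; rfl
  · obtain ⟨K, hK, hKB⟩ := hbd 1
    have : ContinuousOn (fun t => ∑' k, volt B C k t) (Icc 0 1) :=
      continuousOn_tsum (fun k => (volt_cont B hB C k).continuousOn) (hsumm ‖C‖ (K*1))
        (fun k t ht => hle 1 K hK hKB k t ht)
    exact (this 0 (by simp)).mono_of_mem_nhdsWithin (Icc_mem_nhdsGE (by norm_num))
  · intro t ht
    obtain ⟨K, hK, hKB⟩ := hbd (t+1)
    let D : ℕ → ℝ → E := fun k s => match k with
      | 0 => 0
      | m+1 => B s (volt B C m s)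
    have hd : HasDerivAt (fun s => ∑' k, volt B C k s) (∑' k, D k t) t := by
      apply hasDerivAt_tsum_of_isPreconnected
        (u := fun k => match k with
          | 0 => 0
          | m+1 => K * (‖C‖ * ((K * (t+1))^m / (m.factorial : ℝ))))
        (t := Ioo 0 (t+1)) (y₀ := t) ?_ isOpen_Ioo isPreconnected_Ioo ?_ ?_ ?_ ?_ ?_
      · rw [← summable_nat_add_iff 1]
        exact (hsumm ‖C‖ (K*(t+1))).mul_left K
      · intro k s hs
        cases k with
        | zero => exact hasDerivAt_const _ _
        | succ m => exact volt_deriv B hB C m s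
      · intro k s hs
        have hs' : s ∈ Icc 0 (t+1) := ⟨hs.1.le, hs.2.le⟩
        cases k with
        | zero => simp [D]
        | succ m =>
          exact ((B s).le_opNorm _).trans (mul_le_mul (hKB s hs') (hle _ K hK hKB m s hs')
            (norm_nonneg _) hK)
      · exact ⟨ht, by linarith⟩
      · exact hsummX t ht.le
      · exact ⟨ht, by linarith⟩
    have he : ∑' k, D k t = B t (∑' k, volt B C k t) := by
      have hsD : Summable (fun k => D k t) := by
        rw [← summable_nat_add_iff 1]
        exact (B t).summable (hsummX t ht.le)
      rw [hsD.tsum_eq_zero_add, (B t).map_tsum (hsummX t ht.le)]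
      simp [D]
    rw [he] at hd
    exact hd
end

/-- Solutions of the cyclic linear system on the half line. -/
def CycSol (p q : ℝ → Fin 4 → ℝ) (X : ℝ → Fin 4 → ℝ) : Prop :=
  ∀ r, 0 < r → ∀ i, HasDerivAt (fun t => X t i)
    (-(p r i * X r (i-1) + q r (i+1) * X r (i+1))) r

/-- Limit at zero. -/
def Lim0 (X : ℝ → Fin 4 → ℝ) (C : Fin 4 → ℝ) : Prop :=
  ∀ i, Tendsto (fun t => X t i) (𝓝[>] 0) (𝓝 (C i))

/-- Admissible coefficients. -/
def GoodC (δ : ℝ) (p : ℝ → Fin 4 → ℝ) : Prop :=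
  (∀ i, ContinuousOn (fun r => p r i) (Ioi 0)) ∧
    ∀ R, 0 < R → ∃ K, 0 ≤ K ∧ ∀ r, 0 < r → r ≤ R → ∀ i, |p r i| ≤ K * r^(δ-1)

theorem ext_cont (f : ℝ → ℝ) (hf : ContinuousOn f (Ioi 0)) (K : ℝ)
    (hK : ∀ u, 0 < u → u ≤ 1 → |f u| ≤ K * u) :
    Continuous (fun u => if u ≤ 0 then 0 else f u) := by
  rw [continuous_iff_continuousAt]
  intro u
  rcases lt_trichotomy u 0 with h | h | h
  · have : (fun _ => (0:ℝ)) =ᶠ[𝓝 u] (fun u => if u ≤ 0 then 0 else f u) := by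
      filter_upwards [Iio_mem_nhds h] with v hv
      rw [if_pos (le_of_lt hv)]
    exact continuousAt_const.congr this
  · subst h
    have hK0 : 0 ≤ K := by
      have := hK 1 (by norm_num) le_rfl
      have h2 := abs_nonneg (f 1)
      linarith
    rw [ContinuousAt]
    simp only [le_refl, if_true]
    apply squeeze_zero_norm' (a := fun u => K * |u|)
    · filter_upwards [Iio_mem_nhds (show (0:ℝ) < 1 by norm_num)] with v hv
      by_cases h : v ≤ 0
      · simp [h]; positivity
      · simp only [h, if_false]
        rw [Real.norm_eq_abs, abs_of_pos (not_le.mp h)]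
        exact hK v (not_le.mp h) (le_of_lt hv)
    · have : Continuous (fun u : ℝ => K * |u|) := by fun_prop
      simpa using this.tendsto 0
  · have : f =ᶠ[𝓝 u] (fun u => if u ≤ 0 then 0 else f u) := by
      filter_upwards [Ioi_mem_nhds h] with v hv
      rw [if_neg (not_le.mpr hv)]
    exact (hf.continuousAt (Ioi_mem_nhds h)).congr this

theorem subst_cont (δ : ℝ) (hδ : 0 < δ) (p : ℝ → Fin 4 → ℝ) (hp : GoodC δ p) (i : Fin 4) :
    Continuous (fun u : ℝ => if u ≤ 0 then 0 else
      (2/δ) * u^(2/δ - 1) * p (u^(2/δ)) i) := by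
  obtain ⟨hc, hb⟩ := hp
  obtain ⟨K, hK, hKb⟩ := hb 1 one_pos
  have he : 0 < 2/δ := by positivity
  apply ext_cont _ _ ((2/δ) * K)
  · intro u hu hu1
    have h1 : u^(2/δ) ≤ 1 := Real.rpow_le_one hu.le hu1 he.le
    have h2 := hKb _ (Real.rpow_pos_of_pos hu (2/δ)) h1 i
    rw [abs_mul, abs_of_pos (by positivity : 0 < (2/δ) * u^(2/δ - 1))]
    have h3 : u^(2/δ-1) * (u^(2/δ))^(δ-1) = u := by
      rw [← Real.rpow_mul hu.le, ← Real.rpow_add hu]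
      have : 2/δ - 1 + 2/δ*(δ-1) = 1 := by field_simp; ring
      rw [this, Real.rpow_one]
    calc (2/δ) * u^(2/δ - 1) * |p (u^(2/δ)) i| ≤ (2/δ) * u^(2/δ - 1) * (K * (u^(2/δ))^(δ-1)) := by
          gcongr
      _ = (2/δ) * K * (u^(2/δ-1) * (u^(2/δ))^(δ-1)) := by ring
      _ = _ := by rw [h3]
  · have hpow : ∀ c : ℝ, ContinuousOn (fun u : ℝ => u^c) (Ioi 0) := fun c u hu =>
      (Real.continuousAt_rpow_const u c (Or.inl (ne_of_gt hu))).continuousWithinAt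
    refine ContinuousOn.mul (continuousOn_const.mul (hpow _)) ?_
    exact (hc i).comp (hpow _) (fun u hu => Real.rpow_pos_of_pos hu _)

theorem cyc_exists (δ : ℝ) (hδ : 0 < δ) (p q : ℝ → Fin 4 → ℝ) (hp : GoodC δ p) (hq : GoodC δ q)
    (C : Fin 4 → ℝ) : ∃ X, CycSol p q X ∧ Lim0 X C := by
  let P : Fin 4 → ℝ → ℝ := fun i u => if u ≤ 0 then 0 else (2/δ) * u^(2/δ - 1) * p (u^(2/δ)) i
  let Q : Fin 4 → ℝ → ℝ := fun i u => if u ≤ 0 then 0 else (2/δ) * u^(2/δ - 1) * q (u^(2/δ)) i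
  have hP : ∀ i, Continuous (P i) := fun i => subst_cont δ hδ p hp i
  have hQ : ∀ i, Continuous (Q i) := fun i => subst_cont δ hδ q hq i
  let A : Fin 4 → Fin 4 → ((Fin 4 → ℝ) →L[ℝ] (Fin 4 → ℝ)) := fun i j =>
    (ContinuousLinearMap.single ℝ (fun _ : Fin 4 => ℝ) i).comp (ContinuousLinearMap.proj j)
  let B : ℝ → ((Fin 4 → ℝ) →L[ℝ] (Fin 4 → ℝ)) := fun u =>
    -∑ i, (P i u • A i (i-1) + Q (i+1) u • A i (i+1))
  have hB : Continuous B := by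
    refine Continuous.neg (continuous_finsetSum _ fun i _ => ?_)
    exact ((hP i).smul continuous_const).add ((hQ _).smul continuous_const)
  have hBa : ∀ u Z i, B u Z i = -(P i u * Z (i-1) + Q (i+1) u * Z (i+1)) := by
    intro u Z i
    simp only [B, A, ContinuousLinearMap.neg_apply, Pi.neg_apply, ContinuousLinearMap.sum_apply,
      Finset.sum_apply, ContinuousLinearMap.add_apply, ContinuousLinearMap.smul_apply, Pi.add_apply,
      Pi.smul_apply, ContinuousLinearMap.comp_apply, ContinuousLinearMap.proj_apply,
      ContinuousLinearMap.single_apply, smul_eq_mul]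
    congr 1
    rw [Finset.sum_eq_single i]
    · simp
    · intro b _ hb
      simp [Pi.single_apply, Ne.symm hb]
    · simp
  obtain ⟨Z, hZ0, hZc, hZd⟩ := lin_exists B hB C
  refine ⟨fun r => Z (r^(δ/2)), ?_, ?_⟩
  · intro r hr i
    have hu : 0 < r^(δ/2) := Real.rpow_pos_of_pos hr _
    have h1 : HasDerivAt (fun t => t^(δ/2)) ((δ/2) * r^(δ/2-1)) r :=
      Real.hasDerivAt_rpow_const (Or.inl hr.ne')
    have h2 := hasDerivAt_pi.1 (hZd _ hu) i
    have h3 := HasDerivAt.comp r h2 h1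
    have h4 : (r^(δ/2))^(2/δ) = r := by
      rw [← Real.rpow_mul hr.le]
      have : δ/2*(2/δ) = 1 := by field_simp
      rw [this, Real.rpow_one]
    have h5 : (2/δ) * (r^(δ/2))^(2/δ-1) * ((δ/2) * r^(δ/2-1)) = 1 := by
      rw [← Real.rpow_mul hr.le]
      have : δ/2*(2/δ-1) = -(δ/2-1) := by field_simp; ring
      rw [this, Real.rpow_neg hr.le]
      have := (Real.rpow_pos_of_pos hr (δ/2-1)).ne'
      field_simp
    have h6 : B (r^(δ/2)) (Z (r^(δ/2))) i * ((δ/2) * r^(δ/2-1))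
        = -(p r i * Z (r^(δ/2)) (i-1) + q r (i+1) * Z (r^(δ/2)) (i+1)) := by
      rw [hBa]
      simp only [P, Q, if_neg (not_le.mpr hu), h4]
      linear_combination -(p r i * Z (r^(δ/2)) (i-1) + q r (i+1) * Z (r^(δ/2)) (i+1)) * h5
    rw [h6] at h3
    exact h3
  · intro i
    have h1 : Tendsto (fun t : ℝ => t^(δ/2)) (𝓝[>] 0) (𝓝[≥] 0) := by
      rw [tendsto_nhdsWithin_iff]
      constructor
      · have : ContinuousAt (fun t : ℝ => t^(δ/2)) 0 :=
          Real.continuousAt_rpow_const 0 _ (Or.inr (by positivity))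
        have h := this.tendsto
        simp only [Real.zero_rpow (by positivity : δ/2 ≠ 0)] at h
        exact h.mono_left nhdsWithin_le_nhds
      · filter_upwards [self_mem_nhdsWithin] with t ht
        exact Real.rpow_nonneg (le_of_lt ht) _
    have h2 : Tendsto Z (𝓝[≥] 0) (𝓝 C) := by
      have := hZc.tendsto
      rwa [hZ0] at this
    exact (tendsto_pi_nhds.1 (h2.comp h1)) i

theorem exp_mono (N N' : ℝ → ℝ) (c a b : ℝ) (hab : a ≤ b)
    (hd : ∀ r, a ≤ r → r ≤ b → HasDerivAt N (N' r) r)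
    (hN : ∀ r, a ≤ r → r ≤ b → -c * N r ≤ N' r) :
    N a * Real.exp (c * a) ≤ N b * Real.exp (c * b) := by
  have hd2 : ∀ r, a ≤ r → r ≤ b → HasDerivAt (fun r => N r * Real.exp (c * r))
      (N' r * Real.exp (c * r) + N r * (Real.exp (c * r) * c)) r := by
    intro r h1 h2
    have h3 : HasDerivAt (fun r => Real.exp (c * r)) (Real.exp (c*r) * c) r := by
      have := ((hasDerivAt_id r).const_mul c).exp
      simpa using this
    exact (hd r h1 h2).mul h3
  have hm : MonotoneOn (fun r => N r * Real.exp (c * r)) (Icc a b) := by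
    apply monotoneOn_of_deriv_nonneg (convex_Icc a b)
    · intro r hr
      exact (hd2 r hr.1 hr.2).continuousAt.continuousWithinAt
    · intro r hr
      rw [interior_Icc] at hr
      exact (hd2 r hr.1.le hr.2.le).differentiableAt.differentiableWithinAt
    · intro r hr
      rw [interior_Icc] at hr
      rw [(hd2 r hr.1.le hr.2.le).deriv]
      have := hN r hr.1.le hr.2.le
      have he := Real.exp_pos (c * r)
      nlinarith [mul_le_mul_of_nonneg_right this he.le]
  exact hm ⟨le_rfl, hab⟩ ⟨hab, le_rfl⟩ hab

theorem sing_gronwall (N N' : ℝ → ℝ) (c δ R N0 : ℝ) (hδ : 0 < δ)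
    (hd : ∀ r, 0 < r → r ≤ R → HasDerivAt N (N' r) r)
    (hN : ∀ r, 0 < r → r ≤ R → N' r ≤ c * r^(δ-1) * N r)
    (h0 : Tendsto N (𝓝[>] 0) (𝓝 N0)) :
    ∀ r, 0 < r → r ≤ R → N r ≤ N0 * Real.exp (c * r^δ / δ) := by
  intro r hr hrR
  let Φ : ℝ → ℝ := fun r => N r * Real.exp (-(c * r^δ / δ))
  have hd2 : ∀ r, 0 < r → r ≤ R → HasDerivAt Φ
      (N' r * Real.exp (-(c * r^δ/δ)) + N r * (Real.exp (-(c * r^δ/δ)) * (-(c * r^(δ-1))))) r := by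
    intro r h1 h2
    have h4 : HasDerivAt (fun r : ℝ => -(c * r^δ/δ)) (-(c * r^(δ-1))) r := by
      have := (((Real.hasDerivAt_rpow_const (p := δ) (Or.inl h1.ne')).const_mul c).div_const δ).neg
      refine this.congr_deriv ?_
      rw [mul_comm δ, ← mul_assoc, mul_div_assoc, div_self hδ.ne', mul_one]
    exact (hd r h1 h2).mul h4.exp
  have hm : AntitoneOn Φ (Ioc 0 R) := by
    apply antitoneOn_of_deriv_nonpos (convex_Ioc 0 R)
    · intro r hr
      exact (hd2 r hr.1 hr.2).continuousAt.continuousWithinAt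
    · intro r hr
      rw [interior_Ioc] at hr
      exact (hd2 r hr.1 hr.2.le).differentiableAt.differentiableWithinAt
    · intro r hr
      rw [interior_Ioc] at hr
      rw [(hd2 r hr.1 hr.2.le).deriv]
      have := hN r hr.1 hr.2.le
      have he := Real.exp_pos (-(c * r^δ/δ))
      nlinarith [mul_le_mul_of_nonneg_right this he.le]
  have hlim : Tendsto Φ (𝓝[>] 0) (𝓝 N0) := by
    have h1 : Tendsto (fun r : ℝ => Real.exp (-(c * r^δ / δ))) (𝓝[>] 0) (𝓝 1) := by
      have hc : ContinuousAt (fun r : ℝ => Real.exp (-(c * r^δ / δ))) 0 := by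
        have := Real.continuousAt_rpow_const 0 δ (Or.inr hδ.le)
        fun_prop
      have := hc.tendsto
      simp only [Real.zero_rpow hδ.ne', mul_zero, zero_div, neg_zero, Real.exp_zero] at this
      exact this.mono_left nhdsWithin_le_nhds
    simpa using h0.mul h1
  have hle : Φ r ≤ N0 := by
    apply ge_of_tendsto hlim
    filter_upwards [Ioc_mem_nhdsGT hr] with t ht
    exact hm ⟨ht.1, ht.2.trans hrR⟩ ⟨hr, hrR⟩ ht.2
  have : N r = Φ r * Real.exp (c * r^δ/δ) := by
    simp only [Φ]
    rw [mul_assoc, ← Real.exp_add]; simp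
  rw [this]
  exact mul_le_mul_of_nonneg_right hle (Real.exp_pos _).le

theorem cyc_energy (x : Fin 4 → ℝ) (p q g : Fin 4 → ℝ) (k η : ℝ) (hk : 0 ≤ k)
    (hp : ∀ i, |p i| ≤ k) (hq : ∀ i, |q i| ≤ k) (hg : ∀ i, |g i| ≤ η) :
    |∑ i, x i * (-(p i * x (i-1) + q (i+1) * x (i+1)) + g i)|
      ≤ 2 * k * ∑ i, x i^2 + η * ∑ i, |x i| := by
  have h1 : ∀ i, |x i * (-(p i * x (i-1) + q (i+1) * x (i+1)) + g i)| ≤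
      k * ((x i^2 + x (i-1)^2)/2) + k * ((x i^2 + x (i+1)^2)/2) + η * |x i| := by
    intro i
    have hxx : ∀ a b : ℝ, |a * b| ≤ (a^2+b^2)/2 := by
      intro a b
      rw [abs_le]; constructor <;> nlinarith [sq_nonneg (a+b), sq_nonneg (a-b)]
    have e1 : x i * (-(p i * x (i-1) + q (i+1) * x (i+1)) + g i)
      = -(p i * (x i * x (i-1))) + -(q (i+1) * (x i * x (i+1))) + g i * x i := by ring
    rw [e1]
    refine (abs_add_le _ _).trans (add_le_add ((abs_add_le _ _).trans (add_le_add ?_ ?_)) ?_)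
    · rw [abs_neg, abs_mul]
      exact mul_le_mul (hp i) (hxx _ _) (abs_nonneg _) hk
    · rw [abs_neg, abs_mul]
      exact mul_le_mul (hq _) (hxx _ _) (abs_nonneg _) hk
    · rw [abs_mul]
      exact mul_le_mul_of_nonneg_right (hg i) (abs_nonneg _)
  refine (Finset.abs_sum_le_sum_abs _ _).trans ((Finset.sum_le_sum fun i _ => h1 i).trans ?_)
  have s1 : ∑ i : Fin 4, x (i-1)^2 = ∑ i, x i^2 :=
    Equiv.sum_comp (Equiv.subRight (1 : Fin 4)) (fun i => x i^2)
  have s2 : ∑ i : Fin 4, x (i+1)^2 = ∑ i, x i^2 :=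
    Equiv.sum_comp (Equiv.addRight (1 : Fin 4)) (fun i => x i^2)
  rw [Finset.sum_add_distrib, Finset.sum_add_distrib, ← Finset.mul_sum, ← Finset.mul_sum,
    ← Finset.mul_sum, ← Finset.sum_div, ← Finset.sum_div, Finset.sum_add_distrib,
    Finset.sum_add_distrib, s1, s2]
  apply le_of_eq; ring

theorem sumsq_deriv (E : ℝ → Fin 4 → ℝ) (E' : Fin 4 → ℝ) (r : ℝ)
    (h : ∀ i, HasDerivAt (fun t => E t i) (E' i) r) :
    HasDerivAt (fun t => ∑ i, E t i^2) (2 * ∑ i, E r i * E' i) r := by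
  have : HasDerivAt (fun t => ∑ i, E t i^2) (∑ i, 2 * E r i * E' i) r := by
    apply HasDerivAt.fun_sum
    intro i _
    have := (h i).pow 2
    refine HasDerivAt.congr_deriv this ?_
    norm_num
  refine this.congr_deriv ?_
  rw [Finset.mul_sum]
  apply Finset.sum_congr rfl; intros; ring

theorem cyc_gronwall (δ R K η : ℝ) (hδ : 0 < δ) (hK : 0 ≤ K) (hη : 0 ≤ η)
    (p q g E : ℝ → Fin 4 → ℝ)
    (hp : ∀ r, 0 < r → r ≤ R → ∀ i, |p r i| ≤ K * r^(δ-1))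
    (hq : ∀ r, 0 < r → r ≤ R → ∀ i, |q r i| ≤ K * r^(δ-1))
    (hg : ∀ r, 0 < r → r ≤ R → ∀ i, |g r i| ≤ η * r^(δ-1))
    (hE : ∀ r, 0 < r → r ≤ R → ∀ i, HasDerivAt (fun t => E t i)
      (-(p r i * E r (i-1) + q r (i+1) * E r (i+1)) + g r i) r)
    (h0 : Lim0 E 0) :
    ∀ r, 0 < r → r ≤ R → ∑ i, E r i^2 ≤ 4 * η^2 * Real.exp ((4*K+1) * r^δ/δ) := by
  intro r hr hrR
  have key := sing_gronwall (fun r => ∑ i, E r i^2 + 4*η^2)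
    (fun r => 2 * ∑ i, E r i * (-(p r i * E r (i-1) + q r (i+1) * E r (i+1)) + g r i))
    (4*K+1) δ R (4*η^2) hδ ?_ ?_ ?_ r hr hrR
  · nlinarith [sq_nonneg η]
  · intro r h1 h2
    exact (sumsq_deriv E _ r (hE r h1 h2)).add_const _
  · intro r h1 h2
    have hs : 0 < r^(δ-1) := Real.rpow_pos_of_pos h1 _
    have := (le_abs_self _).trans (cyc_energy (E r) (p r) (q r) (g r) (K * r^(δ-1)) (η * r^(δ-1))
      (by positivity) (hp r h1 h2) (hq r h1 h2) (hg r h1 h2))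
    have h3 : 2 * (η * ∑ i, |E r i|) ≤ ∑ i, E r i^2 + 4 * η^2 := by
      have : ∀ i, 2 * (η * |E r i|) ≤ E r i^2 + η^2 := by
        intro i
        rw [← sq_abs (E r i)]
        nlinarith [sq_nonneg (|E r i| - η)]
      have := Finset.sum_le_sum (fun i (_ : i ∈ Finset.univ) => this i)
      rw [← Finset.mul_sum, ← Finset.mul_sum, Finset.sum_add_distrib] at this
      simpa using this
    have h4 : 0 ≤ ∑ i, E r i^2 := Finset.sum_nonneg fun i _ => sq_nonneg _
    calc _ ≤ 2 * (2 * (K * r^(δ-1)) * ∑ i, E r i^2 + η * r^(δ-1) * ∑ i, |E r i|) := by linarith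
      _ = r^(δ-1) * (4 * K * ∑ i, E r i^2 + 2 * (η * ∑ i, |E r i|)) := by ring
      _ ≤ r^(δ-1) * (4 * K * ∑ i, E r i^2 + (∑ i, E r i^2 + 4 * η^2)) := by gcongr
      _ ≤ r^(δ-1) * ((4*K+1) * (∑ i, E r i^2 + 4 * η^2)) := by
          gcongr
          nlinarith [mul_nonneg hK (sq_nonneg η)]
      _ = _ := by ring
  · have : Tendsto (fun r => ∑ i, E r i^2 + 4*η^2) (𝓝[>] 0) (𝓝 (∑ i : Fin 4, (0:ℝ)^2 + 4*η^2)) :=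
      (tendsto_finsetSum _ fun i _ => (h0 i).pow 2).add_const _
    simpa using this

theorem good_bound (δ : ℝ) (p : ℝ → Fin 4 → ℝ) (hp : GoodC δ p) (a b : ℝ) (ha : 0 < a) (hab : a ≤ b) :
    ∃ K, 0 ≤ K ∧ ∀ r, a ≤ r → r ≤ b → ∀ i, |p r i| ≤ K := by
  have : ∀ i, ∃ K, ∀ r ∈ Icc a b, ‖p r i‖ ≤ K := fun i =>
    isCompact_Icc.exists_bound_of_continuousOn
      ((hp.1 i).mono fun r hr => lt_of_lt_of_le ha hr.1)
  choose K hK using this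
  refine ⟨∑ i, |K i|, Finset.sum_nonneg fun i _ => abs_nonneg _, fun r h1 h2 i => ?_⟩
  exact ((hK i r ⟨h1, h2⟩).trans (le_abs_self _)).trans
    (Finset.single_le_sum (f := fun i => |K i|) (fun i _ => abs_nonneg _) (Finset.mem_univ i))

/-- backward uniqueness from an interior point -/
theorem cyc_unique (δ : ℝ) (p q X : ℝ → Fin 4 → ℝ) (hp : GoodC δ p) (hq : GoodC δ q)
    (hX : CycSol p q X) (b : ℝ) (hb : ∀ i, X b i = 0) :
    ∀ a, 0 < a → a ≤ b → ∀ i, X a i = 0 := by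
  intro a ha hab i
  obtain ⟨K, hK, hKp⟩ := good_bound δ p hp a b ha hab
  obtain ⟨K', hK', hKq⟩ := good_bound δ q hq a b ha hab
  have key := exp_mono (fun r => ∑ i, X r i^2) _ (4*max K K') a b hab
    (fun r h1 h2 => sumsq_deriv X (fun i => -(p r i * X r (i-1) + q r (i+1) * X r (i+1)) + 0) r
      (fun i => by simpa using hX r (ha.trans_le h1) i)) ?_
  · simp only [hb] at key
    have h0 : ∑ i, X a i^2 ≤ 0 := by
      have := Real.exp_pos (4 * max K K' * a)
      by_contra h
      push Not at h
      have := mul_pos h this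
      simp at key
      linarith
    have h1 := Finset.single_le_sum (f := fun i => X a i^2) (fun i _ => sq_nonneg _) (Finset.mem_univ i)
    have : X a i^2 = 0 := le_antisymm (h1.trans h0) (sq_nonneg _)
    exact pow_eq_zero_iff (two_ne_zero) |>.1 this
  · intro r h1 h2
    have := (neg_abs_le _).trans' (neg_le_neg (cyc_energy (X r) (p r) (q r) (fun _ => 0) (max K K') 0
      (hK.trans (le_max_left _ _)) (fun i => (hKp r h1 h2 i).trans (le_max_left _ _))
      (fun i => (hKq r h1 h2 i).trans (le_max_right _ _)) (by simp)))
    simp only [zero_mul, add_zero] at this ⊢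
    linarith

theorem negsq_deriv (y : ℝ) : HasDerivAt (fun y : ℝ => (min y 0)^2) (2 * min y 0) y := by
  rcases lt_trichotomy y 0 with h | h | h
  · have h1 : HasDerivAt (fun y : ℝ => y^2) (2 * min y 0) y := by
      rw [min_eq_left h.le]; simpa using hasDerivAt_pow 2 y
    apply h1.congr_of_eventuallyEq
    filter_upwards [Iio_mem_nhds h] with v hv
    rw [min_eq_left (le_of_lt hv)]
  · subst h
    rw [hasDerivAt_iff_isLittleO]
    simp only [min_self, mul_zero, sub_zero, smul_zero]
    norm_num
    have h1 : (fun x : ℝ => (min x 0)^2) =O[𝓝 0] (fun x : ℝ => x^2) := by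
      apply Asymptotics.IsBigO.of_bound 1
      refine Eventually.of_forall fun x => ?_
      rw [norm_pow, norm_pow, one_mul]
      have : ‖min x 0‖ ≤ ‖x‖ := by
        rcases le_total x 0 with h | h
        · rw [min_eq_left h]
        · rw [min_eq_right h]; simp
      gcongr
    exact h1.trans_isLittleO (by simpa using Asymptotics.isLittleO_pow_id (𝕜 := ℝ) one_lt_two)
  · have h1 : HasDerivAt (fun y : ℝ => (0:ℝ)) (2 * min y 0) y := by
      rw [min_eq_right h.le, mul_zero]; exact hasDerivAt_const _ _
    apply h1.congr_of_eventuallyEq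
    filter_upwards [Ioi_mem_nhds h] with v hv
    rw [min_eq_right (le_of_lt hv)]; simp

/-- backward positivity -/
theorem cyc_pos (δ : ℝ) (p q X : ℝ → Fin 4 → ℝ) (hp : GoodC δ p) (hq : GoodC δ q)
    (hp0 : ∀ r, 0 < r → ∀ i, 0 ≤ p r i) (hq0 : ∀ r, 0 < r → ∀ i, 0 ≤ q r i)
    (hX : CycSol p q X) (b : ℝ) (hb : ∀ i, 0 ≤ X b i) :
    ∀ a, 0 < a → a ≤ b → ∀ i, 0 ≤ X a i := by
  intro a ha hab i
  obtain ⟨K, hK, hKp⟩ := good_bound δ p hp a b ha hab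
  obtain ⟨K', hK', hKq⟩ := good_bound δ q hq a b ha hab
  have hd : ∀ r, a ≤ r → r ≤ b → HasDerivAt (fun r => ∑ i, (min (X r i) 0)^2)
      (∑ i, (2 * min (X r i) 0) * (-(p r i * X r (i-1) + q r (i+1) * X r (i+1)))) r := by
    intro r h1 h2
    apply HasDerivAt.fun_sum
    intro i _
    exact (negsq_deriv (X r i)).comp r (hX r (ha.trans_le h1) i)
  have key := exp_mono _ _ (4*max K K') a b hab hd ?_
  · have hb' : ∀ i, min (X b i) 0 = 0 := fun i => min_eq_right (hb i)
    simp only [hb'] at key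
    have h0 : ∑ i, (min (X a i) 0)^2 ≤ 0 := by
      have := Real.exp_pos (4 * max K K' * a)
      by_contra h
      push Not at h
      have := mul_pos h this
      simp at key
      linarith
    have h1 := Finset.single_le_sum (f := fun i => (min (X a i) 0)^2) (fun i _ => sq_nonneg _)
      (Finset.mem_univ i)
    have : (min (X a i) 0)^2 = 0 := le_antisymm (h1.trans h0) (sq_nonneg _)
    have := pow_eq_zero_iff (two_ne_zero) |>.1 this
    rwa [min_eq_right_iff] at this
  · intro r h1 h2
    have hr := ha.trans_le h1
    have := (neg_abs_le _).trans' (neg_le_neg (cyc_energy (fun i => min (X r i) 0) (p r) (q r)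
      (fun _ => 0) (max K K') 0
      (hK.trans (le_max_left _ _)) (fun i => (hKp r h1 h2 i).trans (le_max_left _ _))
      (fun i => (hKq r h1 h2 i).trans (le_max_right _ _)) (by simp)))
    simp only [zero_mul, add_zero] at this
    have h3 : 2 * ∑ i, min (X r i) 0 * (-(p r i * min (X r (i-1)) 0 + q r (i+1) * min (X r (i+1)) 0))
        ≤ ∑ i, (2 * min (X r i) 0) * (-(p r i * X r (i-1) + q r (i+1) * X r (i+1))) := by
      rw [Finset.mul_sum]
      apply Finset.sum_le_sum
      intro i _
      have m0 : min (X r i) 0 ≤ 0 := min_le_right _ _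
      have m1 : min (X r (i-1)) 0 ≤ X r (i-1) := min_le_left _ _
      have m2 : min (X r (i+1)) 0 ≤ X r (i+1) := min_le_left _ _
      have n1 := mul_le_mul_of_nonneg_left m1 (hp0 r hr i)
      have n2 := mul_le_mul_of_nonneg_left m2 (hq0 r hr (i+1))
      nlinarith [mul_nonneg_of_nonpos_of_nonpos m0 (sub_nonpos.2 (add_le_add n1 n2))]
    linarith

theorem CycSol.sum_smul {p q : ℝ → Fin 4 → ℝ} {Y : Fin 4 → ℝ → Fin 4 → ℝ}
    (hY : ∀ j, CycSol p q (Y j)) (C : Fin 4 → ℝ) :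
    CycSol p q (fun r i => ∑ j, C j * Y j r i) := by
  intro r hr i
  have : HasDerivAt (fun t => ∑ j, C j * Y j t i)
      (∑ j, C j * (-(p r i * Y j r (i-1) + q r (i+1) * Y j r (i+1)))) r :=
    HasDerivAt.fun_sum fun j _ => (hY j r hr i).const_mul (C j)
  refine this.congr_deriv ?_
  rw [Finset.mul_sum, Finset.mul_sum, ← Finset.sum_add_distrib, ← Finset.sum_neg_distrib]
  apply Finset.sum_congr rfl
  intros; ring

theorem CycSol.sub_smul {p q X P : ℝ → Fin 4 → ℝ} (hX : CycSol p q X) (hP : CycSol p q P) (t : ℝ) :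
    CycSol p q (fun r i => X r i - t * P r i) := by
  intro r hr i
  refine ((hX r hr i).sub ((hP r hr i).const_mul t)).congr_deriv ?_
  ring

theorem cyc_exists_pos (δ : ℝ) (hδ : 0 < δ) (p q : ℝ → Fin 4 → ℝ) (hp : GoodC δ p) (hq : GoodC δ q)
    (hp0 : ∀ r, 0 < r → ∀ i, 0 ≤ p r i) (hq0 : ∀ r, 0 < r → ∀ i, 0 ≤ q r i) :
    ∃ X C, CycSol p q X ∧ Lim0 X C ∧ (∀ r, 0 < r → ∀ i, 0 ≤ X r i) ∧ C ≠ 0 := by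
  choose Y hY hY0 using fun j : Fin 4 => cyc_exists δ hδ p q hp hq (Pi.single j 1)
  let X : (Fin 4 → ℝ) → ℝ → Fin 4 → ℝ := fun C r i => ∑ j, C j * Y j r i
  have hX : ∀ C, CycSol p q (X C) := fun C => CycSol.sum_smul hY C
  have hX0 : ∀ C, Lim0 (X C) C := by
    intro C i
    have : Tendsto (fun r => ∑ j, C j * Y j r i) (𝓝[>] 0)
        (𝓝 (∑ j, C j * (Pi.single j 1 : Fin 4 → ℝ) i)) :=
      tendsto_finsetSum _ fun j _ => (hY0 j i).const_mul (C j)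
    simpa [Pi.single_apply] using this
  have step : ∀ n : ℕ, ∃ C ∈ stdSimplex ℝ (Fin 4), ∀ r, 0 < r → r ≤ (n:ℝ)+1 → ∀ i, 0 ≤ X C r i := by
    intro n
    have hn : (0:ℝ) < n + 1 := by positivity
    let L : (Fin 4 → ℝ) →ₗ[ℝ] (Fin 4 → ℝ) :=
      { toFun := fun C => X C (n+1)
        map_add' := by
          intro a b; ext i
          simp [X, add_mul, Finset.sum_add_distrib]
        map_smul' := by
          intro a b; ext i
          simp [X, Finset.mul_sum, mul_assoc] }
    have hinj : Function.Injective L := by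
      rw [← LinearMap.ker_eq_bot, LinearMap.ker_eq_bot']
      intro C hC
      have h1 : ∀ i, X C (n+1) i = 0 := fun i => congrFun hC i
      have h2 := cyc_unique δ p q (X C) hp hq (hX C) (n+1) h1
      ext i
      have h3 : Tendsto (fun t => X C t i) (𝓝[>] 0) (𝓝 0) := by
        refine tendsto_const_nhds.congr' ?_
        filter_upwards [Ioc_mem_nhdsGT hn] with t ht
        exact (h2 t ht.1 ht.2 i).symm
      exact tendsto_nhds_unique (hX0 C i) h3
    obtain ⟨C, hC⟩ := (LinearMap.injective_iff_surjective.1 hinj) (fun _ => 1)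
    have h1 : ∀ i, X C (n+1) i = 1 := fun i => congrFun hC i
    have h2 := cyc_pos δ p q (X C) hp hq hp0 hq0 (hX C) (n+1) (fun i => by rw [h1]; norm_num)
    have hC0 : ∀ i, 0 ≤ C i := by
      intro i
      apply ge_of_tendsto (hX0 C i)
      filter_upwards [Ioc_mem_nhdsGT hn] with t ht
      exact h2 t ht.1 ht.2 i
    have hpos : 0 < ∑ i, C i := by
      rcases (Finset.sum_nonneg fun i (_ : i ∈ Finset.univ) => hC0 i).lt_or_eq with h | h
      · exact h
      · exfalso
        have : ∀ i, C i = 0 := fun i =>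
          (Finset.sum_eq_zero_iff_of_nonneg (fun i _ => hC0 i)).1 h.symm i (Finset.mem_univ i)
        have h3 := h1 0
        simp [X, this] at h3
    refine ⟨fun i => (∑ i, C i)⁻¹ * C i, ⟨fun i => mul_nonneg (by positivity) (hC0 i), ?_⟩, ?_⟩
    · rw [← Finset.mul_sum]; field_simp
    · intro r hr hrn i
      have : X (fun i => (∑ i, C i)⁻¹ * C i) r i = (∑ i, C i)⁻¹ * X C r i := by
        simp only [X]
        rw [Finset.mul_sum]
        apply Finset.sum_congr rfl; intros; ring
      rw [this]
      exact mul_nonneg (by positivity) (h2 r hr hrn i)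
  choose c hc hcpos using step
  obtain ⟨C, hC, φ, hφ, hlim⟩ := (isCompact_stdSimplex ℝ (Fin 4)).tendsto_subseq hc
  refine ⟨X C, C, hX C, hX0 C, ?_, ?_⟩
  · intro r hr i
    have h1 : Tendsto (fun n => X (c (φ n)) r i) atTop (𝓝 (X C r i)) := by
      refine tendsto_finsetSum _ fun j _ => ?_
      exact ((tendsto_pi_nhds.1 hlim) j).mul_const _
    apply ge_of_tendsto h1
    obtain ⟨N, hN⟩ := exists_nat_ge r
    filter_upwards [eventually_ge_atTop N] with n hn
    apply hcpos (φ n) r hr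
    have : n ≤ φ n := hφ.id_le n
    have : (N:ℝ) ≤ φ n := by exact_mod_cast hn.trans this
    linarith
  · rintro rfl
    have := hC.2
    simp at this

theorem cone_zero (e : ℝ → Fin 4 → ℝ) (he : ∀ i, Tendsto (fun r => e r i) atTop (𝓝 1))
    (lam mu : ℝ) (hl : 0 < lam) (hm : 0 < mu) (κ : ℝ) (hκ : 0 < κ) :
    ∃ R0, 0 < R0 ∧ ∀ R, R0 ≤ R → ∀ X, CycSol (fun r i => lam * e r i) (fun r i => mu * e r i) X →
      (∃ D R1, ∀ r, R1 ≤ r → ∑ i, X r i^2 ≤ D * Real.exp (-κ * r)) →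
      ∑ i, X R i = 0 → ∀ i, X R i = 0 := by
  set k := min ((lam+mu)/12) (κ/24) with hk
  have hk0 : 0 < k := lt_min (by positivity) (by positivity)
  have hk1 : k ≤ (lam+mu)/12 := min_le_left _ _
  have hk2 : k ≤ κ/24 := min_le_right _ _
  have hev : ∀ c : ℝ, 0 < c → ∀ᶠ r in atTop, ∀ i, |c * (e r i - 1)| ≤ k := by
    intro c hc
    rw [eventually_all]
    intro i
    have h1 : Tendsto (fun r => |c * (e r i - 1)|) atTop (𝓝 |c * (1 - 1)|) :=
      (((he i).sub_const 1).const_mul c).abs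
    simp only [sub_self, mul_zero, abs_zero] at h1
    exact (h1.eventually (Iic_mem_nhds hk0))
  obtain ⟨R0, hR0⟩ := eventually_atTop.1 ((hev lam hl).and (hev mu hm))
  refine ⟨max R0 1, by positivity, ?_⟩
  rintro R hR X hX ⟨D, R1, hD⟩ hσ
  have hRpos : 0 < R := lt_of_lt_of_le (by positivity) hR
  have hR' : R0 ≤ R := (le_max_left _ _).trans hR
  let S : ℝ → ℝ := fun r => ∑ i, X r i
  let T : ℝ → ℝ := fun r => ∑ i, X r i^2
  let D1 : ℝ → Fin 4 → ℝ := fun r i =>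
    -(lam * e r i * X r (i-1) + mu * e r (i+1) * X r (i+1))
  have hTd : ∀ r, 0 < r → HasDerivAt T (2 * ∑ i, X r i * D1 r i) r := fun r hr =>
    sumsq_deriv X (D1 r) r (hX r hr)
  have hSd : ∀ r, 0 < r → HasDerivAt S (∑ i, D1 r i) r := fun r hr =>
    HasDerivAt.fun_sum fun i _ => hX r hr i
  have hQd : ∀ r, 0 < r → HasDerivAt (fun r => T r - S r^2/2)
      (2 * ∑ i, X r i * D1 r i - S r * ∑ i, D1 r i) r := by
    intro r hr
    have h1 := ((hSd r hr).pow 2).div_const 2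
    refine ((hTd r hr).sub h1).congr_deriv ?_
    norm_num
    ring
  have hineq : ∀ r, R ≤ r → -(12*k) * (T r - S r^2/2) ≤
      2 * ∑ i, X r i * D1 r i - S r * ∑ i, D1 r i := by
    intro r hr
    obtain ⟨hl1, hm1⟩ := hR0 r (hR'.trans hr)
    have h1 := cyc_energy (X r) (fun i => lam * (e r i - 1)) (fun i => mu * (e r i - 1)) (fun _ => 0)
      k 0 hk0.le hl1 hm1 (by simp)
    set pert : Fin 4 → ℝ := fun i =>
      -(lam * (e r i - 1) * X r (i-1) + mu * (e r (i+1) - 1) * X r (i+1)) with hpert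
    have h1' : |∑ i, X r i * pert i| ≤ 2 * k * T r := by simpa [hpert, T] using h1
    have h2 : |∑ i, pert i| ≤ 2 * k * ∑ i, |X r i| := by
      have hb : ∀ i, |pert i| ≤ k * |X r (i-1)| + k * |X r (i+1)| := by
        intro i
        simp only [hpert]
        rw [abs_neg]
        refine (abs_add_le _ _).trans ?_
        rw [abs_mul, abs_mul (mu * _)]
        exact add_le_add (mul_le_mul_of_nonneg_right (hl1 i) (abs_nonneg _))
          (mul_le_mul_of_nonneg_right (hm1 _) (abs_nonneg _))
      refine (Finset.abs_sum_le_sum_abs _ _).trans ((Finset.sum_le_sum fun i _ => hb i).trans ?_)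
      have s1 : ∑ i : Fin 4, |X r (i-1)| = ∑ i, |X r i| :=
        Equiv.sum_comp (Equiv.subRight (1 : Fin 4)) (fun i => |X r i|)
      have s2 : ∑ i : Fin 4, |X r (i+1)| = ∑ i, |X r i| :=
        Equiv.sum_comp (Equiv.addRight (1 : Fin 4)) (fun i => |X r i|)
      rw [Finset.sum_add_distrib, ← Finset.mul_sum, ← Finset.mul_sum, s1, s2]
      apply le_of_eq; ring
    have h3 : (∑ i, |X r i|)^2 ≤ 4 * T r := by
      have := sq_sum_le_card_mul_sum_sq (s := (Finset.univ : Finset (Fin 4))) (f := fun i => |X r i|)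
      simpa [T] using this
    have h4 : |S r| ≤ ∑ i, |X r i| := Finset.abs_sum_le_sum_abs _ _
    have h5 : |S r * ∑ i, pert i| ≤ 8 * k * T r := by
      rw [abs_mul]
      calc |S r| * |∑ i, pert i| ≤ (∑ i, |X r i|) * (2 * k * ∑ i, |X r i|) :=
            mul_le_mul h4 h2 (abs_nonneg _) (Finset.sum_nonneg fun i _ => abs_nonneg _)
        _ = 2 * k * (∑ i, |X r i|)^2 := by ring
        _ ≤ 2 * k * (4 * T r) := by gcongr
        _ = _ := by ring
    have e1 : ∑ i, X r i * D1 r i = ∑ i, X r i * pert i -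
        (lam+mu) * ((X r 0 + X r 2) * (X r 1 + X r 3)) := by
      simp only [hpert, D1, Fin.sum_univ_four]
      simp only [show (0:Fin 4) - 1 = 3 by decide, show (1:Fin 4) - 1 = 0 by decide,
        show (2:Fin 4) - 1 = 1 by decide, show (3:Fin 4) - 1 = 2 by decide,
        show (0:Fin 4) + 1 = 1 by decide, show (1:Fin 4) + 1 = 2 by decide,
        show (2:Fin 4) + 1 = 3 by decide, show (3:Fin 4) + 1 = 0 by decide]
      ring
    have e2 : ∑ i, D1 r i = ∑ i, pert i - (lam+mu) * S r := by
      simp only [hpert, D1, S, Fin.sum_univ_four]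
      simp only [show (0:Fin 4) - 1 = 3 by decide, show (1:Fin 4) - 1 = 0 by decide,
        show (2:Fin 4) - 1 = 1 by decide, show (3:Fin 4) - 1 = 2 by decide,
        show (0:Fin 4) + 1 = 1 by decide, show (1:Fin 4) + 1 = 2 by decide,
        show (2:Fin 4) + 1 = 3 by decide, show (3:Fin 4) + 1 = 0 by decide]
      ring
    have e3 : S r = (X r 0 + X r 2) + (X r 1 + X r 3) := by
      simp only [S, Fin.sum_univ_four]; ring
    rw [e1, e2]
    have f1 := (abs_le.1 h1').1
    have f2 := (abs_le.1 h5).2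
    have f3 : (lam+mu) * (S r^2/2) ≤ (lam+mu) * S r^2 -
        2 * ((lam+mu) * ((X r 0 + X r 2) * (X r 1 + X r 3))) := by
      have : 0 < lam + mu := by positivity
      have h6 : S r^2/2 ≤ S r^2 - 2 * ((X r 0 + X r 2) * (X r 1 + X r 3)) := by
        rw [e3]; nlinarith [sq_nonneg ((X r 0 + X r 2) - (X r 1 + X r 3))]
      nlinarith [mul_le_mul_of_nonneg_left h6 this.le]
    have f4 : 6 * k * S r^2 ≤ (lam+mu) * (S r^2/2) := by nlinarith [sq_nonneg (S r)]
    nlinarith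
  have hfin : ∀ r, R ≤ r → R1 ≤ r → 0 ≤ r → T R * Real.exp (12*k*R) ≤ D * Real.exp (-(κ/2) * r) := by
    intro r hr hr1 hr0
    have h1 := exp_mono _ _ (12*k) R r hr (fun t ht _ => hQd t (hRpos.trans_le ht))
      (fun t ht _ => hineq t ht)
    have hS : S R = 0 := hσ
    rw [hS] at h1
    have h2 := hD r hr1
    have hD0 : 0 ≤ D := by
      have : 0 ≤ ∑ i, X r i^2 := Finset.sum_nonneg fun i _ => sq_nonneg _
      have h3 := this.trans h2
      exact nonneg_of_mul_nonneg_left h3 (Real.exp_pos _)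
    have h3 : (T r - S r^2/2) ≤ D * Real.exp (-κ*r) := by
      have : T r ≤ D * Real.exp (-κ*r) := h2
      nlinarith [sq_nonneg (S r)]
    calc T R * Real.exp (12*k*R) ≤ (T r - S r^2/2) * Real.exp (12*k*r) := by simpa using h1
      _ ≤ D * Real.exp (-κ*r) * Real.exp (12*k*r) := by gcongr
      _ = D * Real.exp (-κ*r + 12*k*r) := by rw [mul_assoc, ← Real.exp_add]
      _ ≤ D * Real.exp (-(κ/2) * r) := by
          gcongr
          nlinarith
  have hlim : Tendsto (fun r => D * Real.exp (-(κ/2) * r)) atTop (𝓝 (D * 0)) := by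
    apply Tendsto.const_mul
    apply Real.tendsto_exp_atBot.comp
    exact tendsto_id.const_mul_atTop_of_neg (by linarith)
  have hT : T R * Real.exp (12*k*R) ≤ 0 := by
    rw [mul_zero] at hlim
    apply ge_of_tendsto hlim
    filter_upwards [eventually_ge_atTop R, eventually_ge_atTop R1, eventually_ge_atTop 0] with r a b c
    exact hfin r a b c
  have hT0 : T R ≤ 0 := by
    by_contra h
    push Not at h
    have := mul_pos h (Real.exp_pos (12*k*R))
    linarith
  intro i
  have h1 := Finset.single_le_sum (f := fun i => X R i^2) (fun i _ => sq_nonneg _) (Finset.mem_univ i)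
  have : X R i^2 = 0 := le_antisymm (h1.trans hT0) (sq_nonneg _)
  exact pow_eq_zero_iff (two_ne_zero) |>.1 this

theorem pos_decay (e : ℝ → Fin 4 → ℝ) (he : ∀ i, Tendsto (fun r => e r i) atTop (𝓝 1))
    (lam mu : ℝ) (hl : 0 < lam) (hm : 0 < mu)
    (X : ℝ → Fin 4 → ℝ) (hX : CycSol (fun r i => lam * e r i) (fun r i => mu * e r i) X)
    (hpos : ∀ r, 0 < r → ∀ i, 0 ≤ X r i) :
    ∃ D R1, ∀ r, R1 ≤ r → ∑ i, X r i^2 ≤ D * Real.exp (-(lam+mu) * r) := by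
  have hev : ∀ᶠ r in atTop, ∀ i, 1/2 ≤ e r i := by
    rw [eventually_all]
    intro i
    exact (he i).eventually (Ici_mem_nhds (by norm_num))
  obtain ⟨R0, hR0⟩ := eventually_atTop.1 hev
  set R1 := max R0 1
  have hR1 : 0 < R1 := by positivity
  refine ⟨((∑ i, X R1 i) * Real.exp ((lam+mu)/2 * R1))^2, R1, fun r hr => ?_⟩
  have h1 := exp_mono (fun r => -∑ i, X r i)
    (fun r => -∑ i, -(lam * e r i * X r (i-1) + mu * e r (i+1) * X r (i+1))) ((lam+mu)/2) R1 r hr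
    (fun t ht _ => (HasDerivAt.fun_sum fun i _ => hX t (hR1.trans_le ht) i).neg) ?_
  · have h2 : ∑ i, X r i ≤ (∑ i, X R1 i) * Real.exp ((lam+mu)/2 * R1) * Real.exp (-((lam+mu)/2 * r)) := by
      have : ∑ i, X r i = (∑ i, X r i) * Real.exp ((lam+mu)/2 * r) * Real.exp (-((lam+mu)/2 * r)) := by
        rw [mul_assoc, ← Real.exp_add]; simp
      rw [this]
      refine mul_le_mul_of_nonneg_right ?_ (Real.exp_pos _).le
      linarith
    have h3 : ∑ i, X r i^2 ≤ (∑ i, X r i)^2 :=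
      Finset.sum_sq_le_sq_sum_of_nonneg fun i _ => hpos r (hR1.trans_le hr) i
    have h4 : 0 ≤ ∑ i, X r i := Finset.sum_nonneg fun i _ => hpos r (hR1.trans_le hr) i
    refine h3.trans ((pow_le_pow_left₀ h4 h2 2).trans ?_)
    rw [mul_pow _ (Real.exp (-((lam+mu)/2 * r))), ← Real.exp_nat_mul]
    apply le_of_eq
    congr 2
    push_cast; ring
  · intro t ht _
    have hpt := hpos t (hR1.trans_le ht)
    have h2 := hR0 t ((le_max_left _ _).trans ht)
    have h3 : ∀ i, lam/2 * X t (i-1) + mu/2 * X t (i+1) ≤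
        lam * e t i * X t (i-1) + mu * e t (i+1) * X t (i+1) := by
      intro i
      have a1 := mul_le_mul_of_nonneg_right (mul_le_mul_of_nonneg_left (h2 i) hl.le) (hpt (i-1))
      have a2 := mul_le_mul_of_nonneg_right (mul_le_mul_of_nonneg_left (h2 (i+1)) hm.le) (hpt (i+1))
      linarith
    have h4 := Finset.sum_le_sum fun i (_ : i ∈ Finset.univ) => h3 i
    have s1 : ∑ i : Fin 4, X t (i-1) = ∑ i, X t i :=
        Equiv.sum_comp (Equiv.subRight (1 : Fin 4)) (fun i => X t i)
    have s2 : ∑ i : Fin 4, X t (i+1) = ∑ i, X t i :=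
        Equiv.sum_comp (Equiv.addRight (1 : Fin 4)) (fun i => X t i)
    rw [Finset.sum_add_distrib, ← Finset.mul_sum, ← Finset.mul_sum, s1, s2] at h4
    rw [Finset.sum_neg_distrib, neg_neg]
    linarith

theorem recessive_unique (δ : ℝ) (e : ℝ → Fin 4 → ℝ)
    (he : ∀ i, Tendsto (fun r => e r i) atTop (𝓝 1))
    (lam mu : ℝ) (hl : 0 < lam) (hm : 0 < mu)
    (hp : GoodC δ (fun r i => lam * e r i)) (hq : GoodC δ (fun r i => mu * e r i))
    (X P : ℝ → Fin 4 → ℝ) (C CP : Fin 4 → ℝ)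
    (hX : CycSol (fun r i => lam * e r i) (fun r i => mu * e r i) X)
    (hP : CycSol (fun r i => lam * e r i) (fun r i => mu * e r i) P)
    (hXC : Lim0 X C) (hPC : Lim0 P CP) (hPpos : ∀ r, 0 < r → ∀ i, 0 ≤ P r i) (hCP : CP ≠ 0)
    (κ : ℝ) (hκ : 0 < κ) (hκ2 : κ ≤ lam + mu)
    (hdec : ∃ D R1, ∀ r, R1 ≤ r → ∑ i, X r i^2 ≤ D * Real.exp (-κ * r)) :
    ∃ t : ℝ, (∀ i, C i = t * CP i) ∧ ∀ r, 0 < r → ∀ i, X r i = t * P r i := by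
  obtain ⟨R0, hR0, hcone⟩ := cone_zero e he lam mu hl hm κ hκ
  obtain ⟨D, R1, hD⟩ := hdec
  obtain ⟨D', R1', hD'⟩ := pos_decay e he lam mu hl hm P hP hPpos
  have main : ∀ R, R0 ≤ R → ∃ t : ℝ, (∀ i, C i = t * CP i) ∧ ∀ r, 0 < r → r ≤ R → ∀ i, X r i = t * P r i := by
    intro R hR
    have hRpos := hR0.trans_le hR
    have hσ : ∑ i, P R i ≠ 0 := by
      intro h
      have h1 : ∀ i, P R i = 0 := fun i =>
        (Finset.sum_eq_zero_iff_of_nonneg (fun i _ => hPpos R hRpos i)).1 h i (Finset.mem_univ i)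
      have h2 := cyc_unique δ _ _ P hp hq hP R h1
      apply hCP
      ext i
      have h3 : Tendsto (fun t => P t i) (𝓝[>] 0) (𝓝 0) := by
        refine tendsto_const_nhds.congr' ?_
        filter_upwards [Ioc_mem_nhdsGT hRpos] with t ht
        exact (h2 t ht.1 ht.2 i).symm
      exact tendsto_nhds_unique (hPC i) h3
    set t := (∑ i, X R i) / ∑ i, P R i with ht
    have hZ := hX.sub_smul hP t
    have hZ0 := hcone R hR _ hZ ?_ ?_
    · have h2 := cyc_unique δ _ _ _ hp hq hZ R hZ0
      have h3 : ∀ r, 0 < r → r ≤ R → ∀ i, X r i = t * P r i := fun r h h' i => by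
        have := h2 r h h' i
        linarith
      refine ⟨t, ?_, h3⟩
      intro i
      have h4 : Tendsto (fun r => X r i) (𝓝[>] 0) (𝓝 (t * CP i)) := by
        refine ((hPC i).const_mul t).congr' ?_
        filter_upwards [Ioc_mem_nhdsGT hRpos] with r hr
        exact (h3 r hr.1 hr.2 i).symm
      exact tendsto_nhds_unique (hXC i) h4
    · refine ⟨2 * |D| + 2 * t^2 * |D'|, max (max R1 R1') 0, fun r hr => ?_⟩
      have hr0 : 0 ≤ r := (le_max_right _ _).trans hr
      have a1 := hD r (((le_max_left _ _).trans (le_max_left _ _)).trans hr)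
      have a2 := hD' r (((le_max_right _ _).trans (le_max_left _ _)).trans hr)
      have a3 : Real.exp (-(lam+mu)*r) ≤ Real.exp (-κ*r) := by
        apply Real.exp_le_exp.2; nlinarith
      have a4 : D * Real.exp (-κ*r) ≤ |D| * Real.exp (-κ*r) := by gcongr; exact le_abs_self _
      have a5 : D' * Real.exp (-(lam+mu)*r) ≤ |D'| * Real.exp (-κ*r) := by
        calc _ ≤ |D'| * Real.exp (-(lam+mu)*r) := by gcongr; exact le_abs_self _
          _ ≤ _ := by gcongr
      have a6 : ∑ i, (X r i - t * P r i)^2 ≤ 2 * ∑ i, X r i^2 + 2 * t^2 * ∑ i, P r i^2 := by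
        rw [Finset.mul_sum, Finset.mul_sum, ← Finset.sum_add_distrib]
        apply Finset.sum_le_sum
        intro i _
        nlinarith [sq_nonneg (X r i + t * P r i)]
      calc _ ≤ _ := a6
        _ ≤ 2 * (|D| * Real.exp (-κ*r)) + 2 * t^2 * (|D'| * Real.exp (-κ*r)) := by
            gcongr
            · exact a1.trans a4
            · exact a2.trans a5
        _ = _ := by ring
    · rw [Finset.sum_sub_distrib, ← Finset.mul_sum, ht]
      field_simp
      ring
  obtain ⟨t, htC, _⟩ := main R0 le_rfl
  refine ⟨t, htC, fun r hr i => ?_⟩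
  obtain ⟨t', htC', h⟩ := main (max R0 r) (le_max_left _ _)
  have : t' = t := by
    have ⟨j, hj⟩ := Function.ne_iff.1 hCP
    have h1 := htC j
    rw [htC' j] at h1
    exact mul_right_cancel₀ hj h1
  rw [← this]
  exact h r hr (le_max_right _ _) i

theorem lim_of_deriv_bound (f g : ℝ → ℝ) (M ε R : ℝ) (hε : 0 < ε) (hR : 0 < R) (hM : 0 ≤ M)
    (hd : ∀ r, 0 < r → r ≤ R → HasDerivAt f (g r) r)
    (hg : ∀ r, 0 < r → r ≤ R → |g r| ≤ M * r^(ε-1)) :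
    ∃ l, Tendsto f (𝓝[>] 0) (𝓝 l) ∧ ∀ r, 0 < r → r ≤ R → |f r - l| ≤ M/ε * r^ε := by
  have hpow : ∀ r : ℝ, 0 < r → HasDerivAt (fun r : ℝ => M/ε * r^ε) (M * r^(ε-1)) r := by
    intro r hr
    refine ((Real.hasDerivAt_rpow_const (p := ε) (Or.inl hr.ne')).const_mul (M/ε)).congr_deriv ?_
    field_simp
  have hmono : ∀ s : ℝ, |s| = 1 → MonotoneOn (fun r => M/ε * r^ε + s * f r) (Ioc 0 R) := by
    intro s hs
    have hdd : ∀ r ∈ Ioc 0 R, HasDerivAt (fun r => M/ε * r^ε + s * f r) (M * r^(ε-1) + s * g r) r :=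
      fun r hr => (hpow r hr.1).add ((hd r hr.1 hr.2).const_mul s)
    apply monotoneOn_of_deriv_nonneg (convex_Ioc 0 R)
    · exact fun r hr => (hdd r hr).continuousAt.continuousWithinAt
    · intro r hr
      exact (hdd r (interior_subset hr)).differentiableAt.differentiableWithinAt
    · intro r hr
      have hr' := interior_subset hr
      rw [(hdd r hr').deriv]
      have h1 := hg r hr'.1 hr'.2
      have h2 : |s * g r| ≤ M * r^(ε-1) := by rw [abs_mul, hs, one_mul]; exact h1
      linarith [(abs_le.1 h2).1]
  have hle : ∀ x y, 0 < x → x ≤ y → y ≤ R → |f y - f x| ≤ M/ε * y^ε - M/ε * x^ε := by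
    intro x y hx hxy hy
    have h1 := hmono 1 (by norm_num) ⟨hx, hxy.trans hy⟩ ⟨hx.trans_le hxy, hy⟩ hxy
    have h2 := hmono (-1) (by norm_num) ⟨hx, hxy.trans hy⟩ ⟨hx.trans_le hxy, hy⟩ hxy
    simp only at h1 h2
    rw [abs_le]; constructor <;> linarith
  have hpos : ∀ x : ℝ, 0 < x → 0 ≤ M/ε * x^ε := fun x hx => by positivity
  have ht0 : Tendsto (fun x : ℝ => M/ε * x^ε) (𝓝[>] 0) (𝓝 0) := by
    have h1 : ContinuousAt (fun x : ℝ => M/ε * x^ε) 0 :=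
      (Real.continuousAt_rpow_const 0 ε (Or.inr hε.le)).const_mul (M/ε)
    have h2 := h1.tendsto
    rw [Real.zero_rpow hε.ne', mul_zero] at h2
    exact h2.mono_left nhdsWithin_le_nhds
  have hc : Cauchy (map f (𝓝[>] (0:ℝ))) := by
    rw [Metric.cauchy_iff]
    refine ⟨inferInstance, fun η hη => ?_⟩
    have h1 : ∀ᶠ x in 𝓝[>] (0:ℝ), M/ε * x^ε < η := ht0.eventually (Iio_mem_nhds hη)
    have h2 : ∀ᶠ x in 𝓝[>] (0:ℝ), x ∈ Ioc 0 R := Ioc_mem_nhdsGT hR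
    refine ⟨f '' {x | M/ε * x^ε < η ∧ x ∈ Ioc 0 R}, image_mem_map (h1.and h2), ?_⟩
    rintro _ ⟨x, ⟨hx, hx'⟩, rfl⟩ _ ⟨y, ⟨hy, hy'⟩, rfl⟩
    rw [Real.dist_eq]
    rcases le_total x y with h | h
    · rw [abs_sub_comm]
      have := hle x y hx'.1 h hy'.2
      linarith [hpos x hx'.1]
    · have := hle y x hy'.1 h hx'.2
      linarith [hpos y hy'.1]
  obtain ⟨l, hl⟩ := CompleteSpace.complete hc
  refine ⟨l, hl, fun r hr hrR => ?_⟩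
  have hl' : Tendsto f (𝓝[>] 0) (𝓝 l) := hl
  have h1 : Tendsto (fun x => |f r - f x|) (𝓝[>] 0) (𝓝 |f r - l|) := (hl'.const_sub (f r)).abs
  apply le_of_tendsto h1
  filter_upwards [Ioc_mem_nhdsGT hr] with x hx
  have := hle x r hx.1 hx.2 hrR
  linarith [hpos x hx.1]

theorem radial_asym (u v g : ℝ → ℝ) (γ M ε R : ℝ) (hε : 0 < ε) (hR : 0 < R) (hM : 0 ≤ M)
    (hu : ∀ r, 0 < r → HasDerivAt u (v r / r) r)
    (hv : ∀ r, 0 < r → HasDerivAt v (g r) r)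
    (hg : ∀ r, 0 < r → r ≤ R → |g r| ≤ M * r^(ε-1))
    (hlim : Tendsto (fun r => 2 * u r / Real.log r) (𝓝[>] 0) (𝓝 γ)) :
    Tendsto v (𝓝[>] 0) (𝓝 (γ/2)) ∧
    ∃ L, Tendsto (fun r => 2 * u r - γ * Real.log r) (𝓝[>] 0) (𝓝 L) := by
  obtain ⟨V, hV, hVb⟩ := lim_of_deriv_bound v g M ε R hε hR hM (fun r hr _ => hv r hr) hg
  have hd2 : ∀ r, 0 < r → r ≤ R → HasDerivAt (fun r => 2 * u r - 2 * V * Real.log r)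
      (2 * (v r / r) - 2 * V * r⁻¹) r := fun r hr _ =>
    ((hu r hr).const_mul 2).sub ((Real.hasDerivAt_log hr.ne').const_mul (2*V))
  obtain ⟨L, hL, -⟩ := lim_of_deriv_bound _ _ (2 * (M/ε)) ε R hε hR (by positivity) hd2 (by
    intro r hr hrR
    have h1 : 2 * (v r / r) - 2 * V * r⁻¹ = 2 * (v r - V) * r⁻¹ := by field_simp
    rw [h1, abs_mul, abs_mul, abs_of_pos (inv_pos.2 hr), abs_two, Real.rpow_sub_one hr.ne']
    have h2 := hVb r hr hrR
    have h3 : 2 * |v r - V| * r⁻¹ ≤ 2 * (M/ε * r^ε) * r⁻¹ := by gcongr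
    refine h3.trans (le_of_eq ?_)
    field_simp)
  have hlog : Tendsto Real.log (𝓝[>] 0) atBot := Real.tendsto_log_nhdsGT_zero
  have h3 : Tendsto (fun r => 2 * u r / Real.log r) (𝓝[>] 0) (𝓝 (0 + 2 * V)) := by
    have h4 : Tendsto (fun r => (2 * u r - 2 * V * Real.log r) / Real.log r) (𝓝[>] 0) (𝓝 0) := by
      have := hL.mul (tendsto_inv_atBot_zero.comp hlog)
      simp only [mul_zero] at this
      exact this
    refine (h4.add_const (2*V)).congr' ?_
    filter_upwards [Ioo_mem_nhdsGT (show (0:ℝ) < 1 by norm_num)] with r hr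
    have : Real.log r ≠ 0 := (Real.log_neg hr.1 hr.2).ne
    field_simp
    ring
  have h5 : γ = 2 * V := by
    have := tendsto_nhds_unique hlim h3
    linarith
  subst h5
  refine ⟨by simpa using hV, L, hL⟩

theorem exp_log_bound (h : ℝ → ℝ) (c ε : ℝ) (hε : 0 < ε) (hc : -2 + ε < c)
    (hlim : Tendsto (fun r => h r / Real.log r) (𝓝[>] 0) (𝓝 c)) :
    ∀ᶠ r in 𝓝[>] (0:ℝ), r * Real.exp (h r) ≤ r^(ε-1) := by
  filter_upwards [hlim.eventually (lt_mem_nhds hc), Ioo_mem_nhdsGT (show (0:ℝ) < 1 by norm_num)]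
    with r h1 hr
  have hl := Real.log_neg hr.1 hr.2
  rw [lt_div_iff_of_neg hl] at h1
  calc r * Real.exp (h r) ≤ r * Real.exp ((-2+ε) * Real.log r) := by
        have := hr.1; gcongr
    _ = r^(ε-1) := by
        rw [Real.rpow_def_of_pos hr.1]
        nth_rewrite 1 [← Real.exp_log hr.1]
        rw [← Real.exp_add]; ring_nf

/-- all we need about a solution, in cyclic form -/
structure TTData (γ L : Fin 4 → ℝ) (w v : ℝ → Fin 4 → ℝ) : Prop where
  ha : ∀ i, 0 < 1 + (γ i - γ (i-1))/2
  hw : ∀ r, 0 < r → ∀ i, HasDerivAt (fun t => w t i) (v r i / r) r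
  hv : ∀ r, 0 < r → ∀ i, HasDerivAt (fun t => v t i)
    (2 * r * (Real.exp (w r i - w r (i-1))^2 - Real.exp (w r (i+1) - w r i)^2)) r
  hv0 : ∀ i, Tendsto (fun t => v t i) (𝓝[>] 0) (𝓝 (γ i/2))
  hw0 : ∀ i, Tendsto (fun t => 2 * w t i - γ i * Real.log t) (𝓝[>] 0) (𝓝 (L i))
  hwinf : ∀ i, Tendsto (fun t => w t i) atTop (𝓝 0)
  hvinf : ∃ K R, 0 ≤ K ∧ 0 < R ∧ ∀ r, R ≤ r → ∀ i, |v r i| ≤ K * r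
  hγsymm : ∀ i, γ (3 - i) = -γ i
  hsymm : ∀ r i, w r (3 - i) = -w r i

theorem v_inf (u v g : ℝ → ℝ) (hu : ∀ r, 0 < r → HasDerivAt u (v r / r) r)
    (hv : ∀ r, 0 < r → HasDerivAt v (g r) r) (hinf : Tendsto u atTop (𝓝 0))
    (M R : ℝ) (hM : 0 ≤ M) (hg : ∀ r, R ≤ r → |g r| ≤ M * r) :
    ∃ K, 0 ≤ K ∧ ∃ R, ∀ r, R ≤ r → |v r| ≤ K * r := by
  have h1 : ∀ᶠ r in atTop, |u r| < 1 := by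
    have := hinf.abs
    rw [abs_zero] at this
    exact this.eventually (Iio_mem_nhds one_pos)
  obtain ⟨R1, hR1⟩ := eventually_atTop.1 h1
  refine ⟨2*(2+M), by positivity, max (max R R1) 1, fun r hr => ?_⟩
  have hrR : R ≤ r := (le_max_left _ _).trans ((le_max_left _ _).trans hr)
  have hrR1 : R1 ≤ r := (le_max_right _ _).trans ((le_max_left _ _).trans hr)
  have hr1 : 1 ≤ r := (le_max_right _ _).trans hr
  obtain ⟨ξ, hξ, hξe⟩ := exists_hasDerivAt_eq_slope u (fun r => v r / r) (show r < r+1 by linarith)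
    (fun x hx => (hu x (by linarith [hx.1])).continuousAt.continuousWithinAt)
    (fun x hx => hu x (by linarith [hx.1]))
  have hξ0 : 0 < ξ := by linarith [hξ.1]
  have hvξ : |v ξ| ≤ 2 * (r+1) := by
    have h2 : v ξ = ξ * (u (r+1) - u r) := by
      simp only [add_sub_cancel_left, div_one] at hξe
      rw [← hξe]; field_simp
    rw [h2, abs_mul, abs_of_pos hξ0]
    have h3 := hR1 r hrR1
    have h4 := hR1 (r+1) (by linarith)
    have h5 : |u (r+1) - u r| ≤ 2 := by
      have := abs_sub (u (r+1)) (u r)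
      linarith
    nlinarith [hξ.2, abs_nonneg (u (r+1) - u r)]
  have h6 : |v ξ - v r| ≤ M * (r+1) * |ξ - r| := by
    have := Convex.norm_image_sub_le_of_norm_hasDerivWithin_le (f := v) (f' := g) (s := Icc r (r+1))
      (x := r) (y := ξ) (C := M * (r+1))
      (fun x hx => (hv x (by linarith [hx.1])).hasDerivWithinAt)
      (fun x hx => by
        rw [Real.norm_eq_abs]
        refine (hg x (hrR.trans hx.1)).trans ?_
        exact mul_le_mul_of_nonneg_left hx.2 hM)
      (convex_Icc _ _) ⟨le_rfl, by linarith⟩ ⟨hξ.1.le, hξ.2.le⟩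
    simpa using this
  have h7 : |ξ - r| ≤ 1 := by rw [abs_le]; constructor <;> linarith [hξ.1, hξ.2]
  have h8 : |v ξ - v r| ≤ M * (r+1) := h6.trans (by
    have : 0 ≤ M * (r+1) := by positivity
    nlinarith)
  have h9 : |v r| ≤ |v ξ| + |v ξ - v r| := by
    have := abs_sub (v ξ) (v ξ - v r)
    simpa using this
  nlinarith

theorem ttdata_exists (γ0 γ1 : ℝ)
    (hγ0 : -1 < γ0) (hγ1 : γ1 < 1) (hγ : γ1 > γ0 - 2)
    (w0 w1 : ℝ → ℝ)
    (hsmooth0 : ContDiffOn ℝ (⊤ : ℕ∞) w0 (Set.Ioi 0)) (hsmooth1 : ContDiffOn ℝ (⊤ : ℕ∞) w1 (Set.Ioi 0))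
    (hsol : ∀ r : ℝ, 0 < r →
    (1/2) * deriv (deriv w0) r + (1/(2*r)) * deriv w0 r
        = Real.exp (4 * w0 r) - Real.exp (2 * w1 r - 2 * w0 r) ∧
    (1/2) * deriv (deriv w1) r + (1/(2*r)) * deriv w1 r
        = Real.exp (2 * w1 r - 2 * w0 r) - Real.exp (-(4 * w1 r)))
    (hlim0 : Tendsto w0 atTop (nhds 0)) (hlim1 : Tendsto w1 atTop (nhds 0))
    (hγ0lim : Tendsto (fun r => 2 * w0 r / Real.log r) (nhdsWithin 0 (Set.Ioi 0)) (nhds γ0))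
    (hγ1lim : Tendsto (fun r => 2 * w1 r / Real.log r) (nhdsWithin 0 (Set.Ioi 0)) (nhds γ1)) :
    ∃ L0 L1 w v, TTData ![γ0, γ1, -γ1, -γ0] ![L0, L1, -L1, -L0] w v ∧
      Tendsto (fun r => 2 * w0 r - γ0 * Real.log r) (nhdsWithin 0 (Set.Ioi 0)) (nhds L0) ∧
      Tendsto (fun r => 2 * w1 r - γ1 * Real.log r) (nhdsWithin 0 (Set.Ioi 0)) (nhds L1) := by
  have hdd : ∀ u : ℝ → ℝ, ContDiffOn ℝ (⊤ : ℕ∞) u (Set.Ioi 0) → ∀ r, 0 < r →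
      HasDerivAt u (deriv u r) r ∧ HasDerivAt (deriv u) (deriv (deriv u) r) r := by
    intro u hu r hr
    have h1 : ContDiffAt ℝ (⊤ : ℕ∞) u r := hu.contDiffAt (Ioi_mem_nhds hr)
    refine ⟨(h1.differentiableAt (by simp)).hasDerivAt, ?_⟩
    have h2 : ContDiffOn ℝ 1 (deriv u) (Set.Ioi 0) :=
      hu.deriv_of_isOpen isOpen_Ioi (by exact WithTop.coe_le_coe.2 le_top)
    exact ((h2.contDiffAt (Ioi_mem_nhds hr)).differentiableAt (by simp)).hasDerivAt
  set E0 : ℝ → ℝ := fun r => Real.exp (4 * w0 r) with hE0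
  set E1 : ℝ → ℝ := fun r => Real.exp (2 * w1 r - 2 * w0 r) with hE1
  set E2 : ℝ → ℝ := fun r => Real.exp (-(4 * w1 r)) with hE2
  have hvd : ∀ (u : ℝ → ℝ), ContDiffOn ℝ (⊤ : ℕ∞) u (Set.Ioi 0) → ∀ A : ℝ → ℝ,
      (∀ r, 0 < r → (1/2) * deriv (deriv u) r + (1/(2*r)) * deriv u r = A r) →
      ∀ r, 0 < r → HasDerivAt (fun r => r * deriv u r) (2 * r * A r) r := by
    intro u hu A hA r hr
    refine ((hasDerivAt_id r).mul (hdd u hu r hr).2).congr_deriv ?_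
    rw [← hA r hr]
    simp only [id]
    field_simp
    ring
  have hv0d := hvd w0 hsmooth0 (fun r => E0 r - E1 r) fun r hr => (hsol r hr).1
  have hv1d := hvd w1 hsmooth1 (fun r => E1 r - E2 r) fun r hr => (hsol r hr).2
  have hwd : ∀ u : ℝ → ℝ, ContDiffOn ℝ (⊤ : ℕ∞) u (Set.Ioi 0) → ∀ r, 0 < r →
      HasDerivAt u (r * deriv u r / r) r := by
    intro u hu r hr
    refine (hdd u hu r hr).1.congr_deriv ?_
    field_simp
  -- bounds near zero
  obtain ⟨ε, hε, h0ε, h1ε, h2ε⟩ : ∃ ε : ℝ, 0 < ε ∧ -2 + ε < 2 * γ0 ∧ -2 + ε < γ1 - γ0 ∧ -2 + ε < -2 * γ1 := by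
    refine ⟨min (min (1+γ0) (1-γ1)) ((2+γ1-γ0)/2), ?_, ?_, ?_, ?_⟩
    · refine lt_min (lt_min ?_ ?_) ?_ <;> linarith
    · have := (min_le_left (min (1+γ0) (1-γ1)) ((2+γ1-γ0)/2)).trans (min_le_left _ _)
      linarith
    · have := (min_le_right (min (1+γ0) (1-γ1)) ((2+γ1-γ0)/2))
      linarith
    · have := (min_le_left (min (1+γ0) (1-γ1)) ((2+γ1-γ0)/2)).trans (min_le_right _ _)
      linarith
  have b0 := exp_log_bound (fun r => 4 * w0 r) (2*γ0) ε hε h0ε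
    ((hγ0lim.const_mul 2).congr fun r => by ring)
  have b1 := exp_log_bound (fun r => 2 * w1 r - 2 * w0 r) (γ1 - γ0) ε hε h1ε
    ((hγ1lim.sub hγ0lim).congr fun r => by ring)
  have b2 := exp_log_bound (fun r => -(4 * w1 r)) (-2*γ1) ε hε h2ε
    ((hγ1lim.const_mul (-2)).congr fun r => by ring)
  obtain ⟨R, hR, hb⟩ : ∃ R : ℝ, 0 < R ∧ ∀ r, 0 < r → r ≤ R →
      r * E0 r ≤ r^(ε-1) ∧ r * E1 r ≤ r^(ε-1) ∧ r * E2 r ≤ r^(ε-1) := by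
    have := (b0.and (b1.and b2))
    rw [eventually_nhdsWithin_iff, Metric.eventually_nhds_iff] at this
    obtain ⟨R, hR, h⟩ := this
    refine ⟨R/2, by positivity, fun r hr hrR => h ?_ hr⟩
    rw [Real.dist_eq, sub_zero, abs_of_pos hr]; linarith
  have hgb : ∀ A B : ℝ → ℝ, (∀ r, 0 ≤ A r) → (∀ r, 0 ≤ B r) → ∀ r, 0 < r → r * A r ≤ r^(ε-1) →
      r * B r ≤ r^(ε-1) → |2 * r * (A r - B r)| ≤ 2 * r^(ε-1) := by
    intro A B hA hB r hr h1 h2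
    have := mul_nonneg hr.le (hA r)
    have := mul_nonneg hr.le (hB r)
    rw [abs_le]; constructor <;> nlinarith
  have E0p : ∀ r, 0 ≤ E0 r := fun r => (Real.exp_pos _).le
  have E1p : ∀ r, 0 ≤ E1 r := fun r => (Real.exp_pos _).le
  have E2p : ∀ r, 0 ≤ E2 r := fun r => (Real.exp_pos _).le
  obtain ⟨hV0, L0, hL0⟩ := radial_asym w0 (fun r => r * deriv w0 r) _ γ0 2 ε R hε hR (by norm_num)
    (hwd w0 hsmooth0) hv0d (fun r hr hrR => hgb E0 E1 E0p E1p r hr (hb r hr hrR).1 (hb r hr hrR).2.1)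
    hγ0lim
  obtain ⟨hV1, L1, hL1⟩ := radial_asym w1 (fun r => r * deriv w1 r) _ γ1 2 ε R hε hR (by norm_num)
    (hwd w1 hsmooth1) hv1d (fun r hr hrR => hgb E1 E2 E1p E2p r hr (hb r hr hrR).2.1 (hb r hr hrR).2.2)
    hγ1lim
  -- bounds near infinity
  have hEinf : ∀ h : ℝ → ℝ, Tendsto h atTop (𝓝 0) → ∀ᶠ r in atTop, Real.exp (h r) ≤ 2 := by
    intro h hh
    have h1 : Tendsto (fun r => Real.exp (h r)) atTop (𝓝 (Real.exp 0)) :=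
      (Real.continuous_exp.tendsto 0).comp hh
    rw [Real.exp_zero] at h1
    exact h1.eventually (Iic_mem_nhds (by norm_num))
  have i0 := hEinf (fun r => 4 * w0 r) (by simpa using hlim0.const_mul 4)
  have i1 := hEinf (fun r => 2 * w1 r - 2 * w0 r)
    (by simpa using (hlim1.const_mul 2).sub (hlim0.const_mul 2))
  have i2 := hEinf (fun r => -(4 * w1 r)) (by simpa using (hlim1.const_mul 4).neg)
  obtain ⟨R', hR'⟩ := eventually_atTop.1 ((i0.and (i1.and i2)).and (eventually_ge_atTop (0:ℝ)))
  have hgb2 : ∀ A B : ℝ → ℝ, (∀ r, 0 ≤ A r) → (∀ r, 0 ≤ B r) → ∀ r, 0 ≤ r → A r ≤ 2 → B r ≤ 2 →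
      |2 * r * (A r - B r)| ≤ 4 * r := by
    intro A B hA hB r hr h1 h2
    have := hA r
    have := hB r
    rw [abs_le]; constructor <;> nlinarith
  obtain ⟨K0, hK0, R0, hKR0⟩ := v_inf w0 _ _ (hwd w0 hsmooth0) hv0d hlim0 4 R' (by norm_num)
    (fun r hr => hgb2 E0 E1 E0p E1p r (hR' r hr).2 (hR' r hr).1.1 (hR' r hr).1.2.1)
  obtain ⟨K1, hK1, R1, hKR1⟩ := v_inf w1 _ _ (hwd w1 hsmooth1) hv1d hlim1 4 R' (by norm_num)
    (fun r hr => hgb2 E1 E2 E1p E2p r (hR' r hr).2 (hR' r hr).1.2.1 (hR' r hr).1.2.2)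
  refine ⟨L0, L1, fun r => ![w0 r, w1 r, -w1 r, -w0 r],
    fun r => ![r * deriv w0 r, r * deriv w1 r, -(r * deriv w1 r), -(r * deriv w0 r)], ?_, hL0, hL1⟩
  have hsq : ∀ x : ℝ, Real.exp x ^ 2 = Real.exp (2*x) := fun x => by
    rw [← Real.exp_nat_mul]; norm_num
  constructor
  · intro i; fin_cases i <;> simp <;> linarith
  · intro r hr i
    have h0 := hwd w0 hsmooth0 r hr
    have h1 := hwd w1 hsmooth1 r hr
    fin_cases i
    · exact h0
    · exact h1
    · exact h1.neg.congr_deriv (by simp [neg_div])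
    · exact h0.neg.congr_deriv (by simp [neg_div])
  · intro r hr i
    have h0 := hv0d r hr
    have h1 := hv1d r hr
    simp only [hsq]
    fin_cases i
    · refine h0.congr_deriv ?_
      simp only [hE0, hE1]
      simp
      ring_nf
      simp
    · refine h1.congr_deriv ?_
      simp only [hE1, hE2]
      simp
      ring_nf
      simp
    · refine h1.neg.congr_deriv ?_
      simp only [hE1, hE2]
      simp
      ring_nf
    · refine h0.neg.congr_deriv ?_
      simp only [hE0, hE1]
      simp
      ring_nf
  · intro i
    fin_cases i
    · exact hV0
    · exact hV1
    · simpa [neg_div] using hV1.neg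
    · simpa [neg_div] using hV0.neg
  · intro i
    fin_cases i
    · exact hL0
    · exact hL1
    · exact hL1.neg.congr fun r => by simp; ring
    · exact hL0.neg.congr fun r => by simp; ring
  · intro i
    fin_cases i
    · exact hlim0
    · exact hlim1
    · simpa using hlim1.neg
    · simpa using hlim0.neg
  · refine ⟨max K0 K1, max (max R0 R1) 1, by positivity, by positivity, fun r hr i => ?_⟩
    have hr1 : 1 ≤ r := (le_max_right _ _).trans hr
    have h0 := hKR0 r ((le_max_left _ _).trans ((le_max_left _ _).trans hr))
    have h1 := hKR1 r ((le_max_right _ _).trans ((le_max_left _ _).trans hr))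
    have h0' : |r * deriv w0 r| ≤ max K0 K1 * r := h0.trans (by gcongr; exact le_max_left _ _)
    have h1' : |r * deriv w1 r| ≤ max K0 K1 * r := h1.trans (by gcongr; exact le_max_right _ _)
    fin_cases i
    · exact h0'
    · exact h1'
    · simpa using h1'
    · simpa using h0'
  · intro i
    fin_cases i
    · rfl
    · rfl
    · exact (neg_neg _).symm
    · exact (neg_neg _).symm
  · intro r i
    fin_cases i
    · rfl
    · rfl
    · exact (neg_neg _).symm
    · exact (neg_neg _).symm

noncomputable def aa (γ : Fin 4 → ℝ) (i : Fin 4) : ℝ := 1 + (γ i - γ (i-1))/2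

noncomputable def ee (w : ℝ → Fin 4 → ℝ) (r : ℝ) (i : Fin 4) : ℝ := Real.exp (w r i - w r (i-1))

theorem ee_pos (w : ℝ → Fin 4 → ℝ) (r : ℝ) (i : Fin 4) : 0 < ee w r i := Real.exp_pos _

theorem bounded_near (X : ℝ → Fin 4 → ℝ) (C : Fin 4 → ℝ)
    (hc : ∀ i, ContinuousOn (fun t => X t i) (Ioi 0)) (h0 : Lim0 X C) (R : ℝ) :
    ∃ M, 0 ≤ M ∧ ∀ r, 0 < r → r ≤ R → ∀ i, |X r i| ≤ M := by
  have h1 : ∀ i, ∃ M, ∀ r, 0 < r → r ≤ R → |X r i| ≤ M := by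
    intro i
    have h2 : ∀ᶠ r in 𝓝[>] (0:ℝ), |X r i| < |C i| + 1 :=
      (h0 i).abs.eventually (Iio_mem_nhds (by linarith))
    rw [eventually_nhdsWithin_iff, Metric.eventually_nhds_iff] at h2
    obtain ⟨ε, hε, h2⟩ := h2
    obtain ⟨M, hM⟩ := (isCompact_Icc (a := ε/2) (b := R)).exists_bound_of_continuousOn
      ((hc i).mono fun r hr => lt_of_lt_of_le (by positivity : 0 < ε/2) hr.1)
    refine ⟨max M (|C i| + 1), fun r hr hrR => ?_⟩
    rcases le_total (ε/2) r with h | h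
    · exact (hM r ⟨h, hrR⟩).trans (le_max_left _ _)
    · refine (h2 ?_ hr).le.trans (le_max_right _ _)
      rw [Real.dist_eq, sub_zero, abs_of_pos hr]; linarith
  choose M hM using h1
  refine ⟨∑ i, |M i|, Finset.sum_nonneg fun i _ => abs_nonneg _, fun r h1 h2 i => ?_⟩
  exact ((hM i r h1 h2).trans (le_abs_self _)).trans
    (Finset.single_le_sum (f := fun i => |M i|) (fun i _ => abs_nonneg _) (Finset.mem_univ i))

theorem CycSol.cont {p q X : ℝ → Fin 4 → ℝ} (h : CycSol p q X) (i : Fin 4) :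
    ContinuousOn (fun t => X t i) (Ioi 0) :=
  fun r hr => (h r hr i).continuousAt.continuousWithinAt

theorem GoodC.const_mul {δ : ℝ} {p : ℝ → Fin 4 → ℝ} (hp : GoodC δ p) (c : Fin 4 → ℝ) :
    GoodC δ (fun r i => c i * p r i) := by
  refine ⟨fun i => continuousOn_const.mul (hp.1 i), fun R hR => ?_⟩
  obtain ⟨K, hK, hb⟩ := hp.2 R hR
  refine ⟨(∑ i, |c i|) * K, mul_nonneg (Finset.sum_nonneg fun i _ => abs_nonneg _) hK,
    fun r hr hrR i => ?_⟩
  rw [abs_mul, mul_assoc]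
  refine mul_le_mul ?_ (hb r hr hrR i) (abs_nonneg _) (Finset.sum_nonneg fun i _ => abs_nonneg _)
  exact Finset.single_le_sum (f := fun i => |c i|) (fun i _ => abs_nonneg _) (Finset.mem_univ i)

namespace TTData
variable {γ L : Fin 4 → ℝ} {w v : ℝ → Fin 4 → ℝ}

theorem aa_pos (h : TTData γ L w v) (i : Fin 4) : 0 < aa γ i := h.ha i

theorem ee_deriv (h : TTData γ L w v) (r : ℝ) (hr : 0 < r) (i : Fin 4) :
    HasDerivAt (fun t => ee w t i) (ee w r i * ((v r i - v r (i-1))/r)) r := by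
  refine ((h.hw r hr i).sub (h.hw r hr (i-1))).exp.congr_deriv ?_
  simp only [ee]
  rw [sub_div]
  rfl

theorem ee_inf (h : TTData γ L w v) (i : Fin 4) : Tendsto (fun r => ee w r i) atTop (𝓝 1) := by
  have h1 := (h.hwinf i).sub (h.hwinf (i-1))
  have h2 := (Real.continuous_exp.tendsto _).comp h1
  rw [sub_zero, Real.exp_zero] at h2
  exact h2

theorem ee_cont (h : TTData γ L w v) (i : Fin 4) : ContinuousOn (fun r => ee w r i) (Ioi 0) :=
  fun r hr => (h.ee_deriv r hr i).continuousAt.continuousWithinAt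

theorem ee_zero (h : TTData γ L w v) (i : Fin 4) :
    Tendsto (fun r => ee w r i * r^(1 - aa γ i)) (𝓝[>] 0) (𝓝 (Real.exp ((L i - L (i-1))/2))) := by
  have h1 := ((h.hw0 i).sub (h.hw0 (i-1))).div_const 2
  have h2 := (Real.continuous_exp.tendsto _).comp h1
  refine h2.congr' ?_
  filter_upwards [self_mem_nhdsWithin] with r hr
  have hr' : (0:ℝ) < r := hr
  simp only [Function.comp, ee, aa]
  rw [Real.rpow_def_of_pos hr', ← Real.exp_add]
  congr 1
  ring

theorem exists_delta (h : TTData γ L w v) : ∃ δ : ℝ, 0 < δ ∧ δ ≤ 1 ∧ ∀ i, δ ≤ aa γ i := by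
  refine ⟨min (min (min (aa γ 0) (aa γ 1)) (min (aa γ 2) (aa γ 3))) 1, ?_, min_le_right _ _, ?_⟩
  · exact lt_min (lt_min (lt_min (h.aa_pos _) (h.aa_pos _)) (lt_min (h.aa_pos _) (h.aa_pos _))) one_pos
  · intro i
    fin_cases i <;> simp

theorem ee_good (h : TTData γ L w v) {δ : ℝ} (hδ : ∀ i, δ ≤ aa γ i) : GoodC δ (ee w) := by
  refine ⟨h.ee_cont, fun R hR => ?_⟩
  obtain ⟨M, hM, hb⟩ := bounded_near (fun r i => ee w r i * r^(1 - aa γ i)) _ (fun i =>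
    (h.ee_cont i).mul (fun r hr => (Real.continuousAt_rpow_const r _
      (Or.inl (ne_of_gt hr))).continuousWithinAt)) h.ee_zero R
  refine ⟨M * ∑ i, R^(aa γ i - δ), by positivity, fun r hr hrR i => ?_⟩
  have h1 := hb r hr hrR i
  have h2 : ee w r i = (ee w r i * r^(1 - aa γ i)) * (r^(aa γ i - δ) * r^(δ-1)) := by
    rw [mul_assoc, ← Real.rpow_add hr, ← Real.rpow_add hr]
    ring_nf
    simp
  rw [h2, abs_mul, abs_of_nonneg (a := r^(aa γ i - δ) * r^(δ-1)) (by positivity), mul_assoc]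
  have h3 : r^(aa γ i - δ) ≤ ∑ i, R^(aa γ i - δ) :=
    (Real.rpow_le_rpow hr.le hrR (by linarith [hδ i])).trans
      (Finset.single_le_sum (f := fun i => R^(aa γ i - δ)) (fun i _ => by positivity) (Finset.mem_univ i))
  exact mul_le_mul h1 (mul_le_mul_of_nonneg_right h3 (by positivity)) (by positivity) hM

end TTData

/-- coefficients of the flow -/
noncomputable def pl (γ : Fin 4 → ℝ) (w : ℝ → Fin 4 → ℝ) (l r : ℝ) (i : Fin 4) : ℝ :=
  Real.exp (aa γ i * l) * ee w r i
noncomputable def ql (γ : Fin 4 → ℝ) (w : ℝ → Fin 4 → ℝ) (l r : ℝ) (i : Fin 4) : ℝ :=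
  Real.exp (-(aa γ i * l)) * ee w r i

noncomputable def VV (γ : Fin 4 → ℝ) (w v : ℝ → Fin 4 → ℝ) (l : ℝ) (G : ℝ → Fin 4 → ℝ)
    (r : ℝ) (i : Fin 4) : ℝ :=
  (γ i/2 - v r i) * G r i + r * ql γ w l r (i+1) * G r (i+1) - r * pl γ w l r i * G r (i-1)

namespace TTData
variable {γ L : Fin 4 → ℝ} {w v : ℝ → Fin 4 → ℝ}

theorem pl_good (h : TTData γ L w v) {δ : ℝ} (hδ : ∀ i, δ ≤ aa γ i) (l : ℝ) : GoodC δ (pl γ w l) :=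
  (h.ee_good hδ).const_mul _
theorem ql_good (h : TTData γ L w v) {δ : ℝ} (hδ : ∀ i, δ ≤ aa γ i) (l : ℝ) : GoodC δ (ql γ w l) :=
  (h.ee_good hδ).const_mul _

theorem VV_deriv (h : TTData γ L w v) (l : ℝ) (G : ℝ → Fin 4 → ℝ)
    (hG : CycSol (pl γ w l) (ql γ w l) G) (r : ℝ) (hr : 0 < r) (i : Fin 4) :
    HasDerivAt (fun t => VV γ w v l G t i)
      (-(pl γ w l r i * VV γ w v l G r (i-1) + ql γ w l r (i+1) * VV γ w v l G r (i+1))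
       - (aa γ i * pl γ w l r i * G r (i-1) - aa γ (i+1) * ql γ w l r (i+1) * G r (i+1))) r := by
  have hp : ∀ j, HasDerivAt (fun t => pl γ w l t j) (pl γ w l r j * ((v r j - v r (j-1))/r)) r := by
    intro j
    refine ((h.ee_deriv r hr j).const_mul (Real.exp (aa γ j * l))).congr_deriv ?_
    simp only [pl]; ring
  have hq : ∀ j, HasDerivAt (fun t => ql γ w l t j) (ql γ w l r j * ((v r j - v r (j-1))/r)) r := by
    intro j
    refine ((h.ee_deriv r hr j).const_mul (Real.exp (-(aa γ j * l)))).congr_deriv ?_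
    simp only [ql]; ring
  have hpq : ∀ j, ee w r j ^ 2 = pl γ w l r j * ql γ w l r j := by
    intro j
    simp only [pl, ql]
    have : Real.exp (aa γ j * l) * Real.exp (-(aa γ j * l)) = 1 := by
      rw [← Real.exp_add]; simp
    linear_combination (-(ee w r j^2)) * this
  have hv' : HasDerivAt (fun t => v t i) (2 * r * (pl γ w l r i * ql γ w l r i -
      pl γ w l r (i+1) * ql γ w l r (i+1))) r := by
    refine (h.hv r hr i).congr_deriv ?_
    rw [← hpq i, ← hpq (i+1)]
    simp only [ee, add_sub_cancel_right]
  have key := (((hv'.const_sub (γ i/2)).mul (hG r hr i)).add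
    (((hasDerivAt_id r).mul (hq (i+1))).mul (hG r hr (i+1)))).sub
    (((hasDerivAt_id r).mul (hp i)).mul (hG r hr (i-1)))
  refine key.congr_deriv ?_
  simp only [VV, aa, sub_add_cancel, add_sub_cancel_right, id]
  field_simp
  simp only [Pi.mul_apply, id]
  ring

theorem VV_lim (h : TTData γ L w v) (l : ℝ) (G : ℝ → Fin 4 → ℝ) (C : Fin 4 → ℝ)
    (hC : Lim0 G C) : Lim0 (VV γ w v l G) 0 := by
  obtain ⟨δ, hδ, -, hδa⟩ := h.exists_delta
  have hz : ∀ p, GoodC δ p → ∀ i, Tendsto (fun r => r * p r i) (𝓝[>] 0) (𝓝 0) := by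
    intro p hp i
    obtain ⟨K, hK, hb⟩ := hp.2 1 one_pos
    have ht0 : Tendsto (fun x : ℝ => K * x^δ) (𝓝[>] 0) (𝓝 0) := by
      have h1 : ContinuousAt (fun x : ℝ => K * x^δ) 0 :=
        (Real.continuousAt_rpow_const 0 δ (Or.inr hδ.le)).const_mul K
      have h2 := h1.tendsto
      rw [Real.zero_rpow hδ.ne', mul_zero] at h2
      exact h2.mono_left nhdsWithin_le_nhds
    refine squeeze_zero_norm' ?_ ht0
    filter_upwards [Ioc_mem_nhdsGT one_pos] with r hr
    have h1 := hb r hr.1 hr.2 i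
    rw [Real.norm_eq_abs, abs_mul, abs_of_pos hr.1]
    calc r * |p r i| ≤ r * (K * r^(δ-1)) := mul_le_mul_of_nonneg_left h1 hr.1.le
      _ = K * r^δ := by
        rw [Real.rpow_sub_one hr.1.ne']
        have := hr.1.ne'
        field_simp
  intro i
  have h1 := ((((h.hv0 i).const_sub (γ i/2)).mul (hC i)).add
    ((hz _ (h.ql_good hδa l) (i+1)).mul (hC (i+1)))).sub
    ((hz _ (h.pl_good hδa l) i).mul (hC (i-1)))
  simpa [VV] using h1

theorem ddl (h : TTData γ L w v) (G : ℝ → ℝ → Fin 4 → ℝ) (C : Fin 4 → ℝ)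
    (hG : ∀ l, CycSol (pl γ w l) (ql γ w l) (G l)) (hC : ∀ l, Lim0 (G l) C)
    (r : ℝ) (hr : 0 < r) (l : ℝ) (i : Fin 4) :
    HasDerivAt (fun l => G l r i) (VV γ w v l (G l) r i) l := by
  obtain ⟨δ, hδ, -, hδa⟩ := h.exists_delta
  obtain ⟨K, hK, hKe⟩ := (h.ee_good hδa).2 r hr
  obtain ⟨M1, hM1, hM1b⟩ := bounded_near _ C (hG l).cont (hC l) r
  obtain ⟨M2, hM2, hM2b⟩ := bounded_near (VV γ w v l (G l)) 0
    (fun i s hs => (h.VV_deriv l (G l) (hG l) s hs i).continuousAt.continuousWithinAt)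
    (h.VV_lim l (G l) C (hC l)) r
  set A : ℝ := ∑ i, aa γ i with hA
  have haA : ∀ i, aa γ i ≤ A := fun i =>
    Finset.single_le_sum (f := fun i => aa γ i) (fun i _ => (h.aa_pos i).le) (Finset.mem_univ i)
  have hA0 : 0 < A := (h.aa_pos 0).trans_le (haA 0)
  set B : ℝ := Real.exp (A * (|l| + 1)) with hB
  have hB0 : 0 < B := Real.exp_pos _
  have hexpB : ∀ c : ℝ, |c| ≤ A → ∀ m, |m| ≤ |l| + 1 → Real.exp (c * m) ≤ B := by
    intro c hc m hm
    apply Real.exp_le_exp.2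
    refine (le_abs_self _).trans ?_
    rw [abs_mul]
    exact mul_le_mul hc hm (abs_nonneg _) hA0.le
  have e1 : ∀ c η : ℝ, |c| ≤ A → |η| ≤ 1/A → |Real.exp (c * (l+η)) - Real.exp (c*l)| ≤ 2 * B * A * |η| := by
    intro c η hc hη
    have hx : |c * η| ≤ A * |η| := by rw [abs_mul]; gcongr
    have hx1 : |c * η| ≤ 1 := hx.trans (by
      calc A * |η| ≤ A * (1/A) := by gcongr
        _ = 1 := by field_simp)
    have h1 := Real.abs_exp_sub_one_le hx1
    have h2 : Real.exp (c*(l+η)) - Real.exp (c*l) = Real.exp (c*l) * (Real.exp (c*η) - 1) := by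
      rw [mul_add, Real.exp_add]; ring
    rw [h2, abs_mul, abs_of_pos (Real.exp_pos _)]
    calc Real.exp (c*l) * |Real.exp (c*η) - 1| ≤ B * (2 * |c*η|) :=
          mul_le_mul (hexpB c hc l (by linarith)) h1 (abs_nonneg _) hB0.le
      _ ≤ B * (2 * (A * |η|)) := by gcongr
      _ = _ := by ring
  have e2 : ∀ c η : ℝ, |c| ≤ A → |η| ≤ 1/A →
      |Real.exp (c * (l+η)) - Real.exp (c*l) - η * c * Real.exp (c*l)| ≤ B * A^2 * η^2 := by
    intro c η hc hη
    have hx : |c * η| ≤ A * |η| := by rw [abs_mul]; gcongr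
    have hx1 : |c * η| ≤ 1 := hx.trans (by
      calc A * |η| ≤ A * (1/A) := by gcongr
        _ = 1 := by field_simp)
    have h1 := Real.abs_exp_sub_one_sub_id_le hx1
    have h2 : Real.exp (c*(l+η)) - Real.exp (c*l) - η * c * Real.exp (c*l)
        = Real.exp (c*l) * (Real.exp (c*η) - 1 - c*η) := by
      rw [mul_add, Real.exp_add]; ring
    rw [h2, abs_mul, abs_of_pos (Real.exp_pos _)]
    have h3 : (c*η)^2 ≤ A^2*η^2 := by
      rw [← sq_abs (c*η), ← sq_abs η, ← mul_pow]
      exact pow_le_pow_left₀ (abs_nonneg _) hx 2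
    calc Real.exp (c*l) * |Real.exp (c*η) - 1 - c*η| ≤ B * (c*η)^2 :=
          mul_le_mul (hexpB c hc l (by linarith)) h1 (abs_nonneg _) hB0.le
      _ ≤ B * (A^2*η^2) := by gcongr
      _ = _ := by ring
  set Q : ℝ := 2 * K * (B * A^2 * M1 + 2 * B * A * M2) with hQ
  have hQ0 : 0 ≤ Q := by positivity
  set W : ℝ := Real.sqrt (Real.exp ((4*(B*K)+1) * r^δ/δ)) with hW
  have main : ∀ η : ℝ, |η| ≤ min 1 (1/A) →
      |G (l+η) r i - G l r i - η * VV γ w v l (G l) r i| ≤ 2 * Q * W * η^2 := by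
    intro η hη'
    have hη1 : |η| ≤ 1 := hη'.trans (min_le_left _ _)
    have hη : |η| ≤ 1/A := hη'.trans (min_le_right _ _)
    have haabs : ∀ j, |aa γ j| ≤ A := fun j => by rw [abs_of_pos (h.aa_pos j)]; exact haA j
    have haabs' : ∀ j, |-aa γ j| ≤ A := fun j => by rw [abs_neg]; exact haabs j
    have hlη : |l+η| ≤ |l| + 1 := (abs_add_le _ _).trans (by linarith)
    let E : ℝ → Fin 4 → ℝ := fun s j => G (l+η) s j - G l s j - η * VV γ w v l (G l) s j
    let g : ℝ → Fin 4 → ℝ := fun s j =>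
      -(ee w s j * ((Real.exp (aa γ j * (l+η)) - Real.exp (aa γ j*l) - η * aa γ j * Real.exp (aa γ j*l)) * G l s (j-1)
        + η * (Real.exp (aa γ j * (l+η)) - Real.exp (aa γ j*l)) * VV γ w v l (G l) s (j-1)))
      -(ee w s (j+1) * ((Real.exp (-aa γ (j+1) * (l+η)) - Real.exp (-aa γ (j+1)*l)
          - η * -aa γ (j+1) * Real.exp (-aa γ (j+1)*l)) * G l s (j+1)
        + η * (Real.exp (-aa γ (j+1) * (l+η)) - Real.exp (-aa γ (j+1)*l)) * VV γ w v l (G l) s (j+1)))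
    have hgr := cyc_gronwall δ r (B*K) (Q*η^2) hδ (by positivity) (by positivity)
      (pl γ w (l+η)) (ql γ w (l+η)) g E ?_ ?_ ?_ ?_ ?_ r hr le_rfl
    · have h1 : E r i^2 ≤ ∑ j, E r j^2 :=
        Finset.single_le_sum (f := fun j => E r j^2) (fun j _ => sq_nonneg _) (Finset.mem_univ i)
      apply abs_le_of_sq_le_sq _ (by positivity)
      refine h1.trans (hgr.trans (le_of_eq ?_))
      have : W^2 = Real.exp ((4*(B*K)+1) * r^δ/δ) := Real.sq_sqrt (Real.exp_pos _).le
      rw [← this]; ring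
    · intro s hs hsr j
      simp only [pl]
      rw [abs_mul, abs_of_pos (Real.exp_pos _), mul_assoc]
      exact mul_le_mul (hexpB _ (haabs j) _ hlη) (hKe s hs hsr j) (abs_nonneg _) hB0.le
    · intro s hs hsr j
      simp only [ql]
      rw [abs_mul, abs_of_pos (Real.exp_pos _), mul_assoc, ← neg_mul]
      exact mul_le_mul (hexpB _ (haabs' j) _ hlη) (hKe s hs hsr j) (abs_nonneg _) hB0.le
    · intro s hs hsr j
      have hterm : ∀ c : ℝ, |c| ≤ A → ∀ j k, |ee w s j * ((Real.exp (c * (l+η)) - Real.exp (c*l)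
          - η * c * Real.exp (c*l)) * G l s k
          + η * (Real.exp (c * (l+η)) - Real.exp (c*l)) * VV γ w v l (G l) s k)| ≤
          (K * s^(δ-1)) * (B * A^2 * η^2 * M1 + |η| * (2 * B * A * |η|) * M2) := by
        intro c hc j k
        rw [abs_mul]
        refine mul_le_mul (hKe s hs hsr j) ?_ (abs_nonneg _) (by positivity)
        refine (abs_add_le _ _).trans (add_le_add ?_ ?_)
        · rw [abs_mul]
          exact mul_le_mul (e2 c η hc hη) (hM1b s hs hsr k) (abs_nonneg _) (by positivity)
        · rw [abs_mul, abs_mul]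
          exact mul_le_mul (mul_le_mul_of_nonneg_left (e1 c η hc hη) (abs_nonneg _))
            (hM2b s hs hsr k) (abs_nonneg _) (by positivity)
      refine (abs_sub _ _).trans ?_
      rw [abs_neg]
      refine (add_le_add (hterm _ (haabs j) j (j-1)) (hterm _ (haabs' (j+1)) (j+1) (j+1))).trans (le_of_eq ?_)
      have : |η| * |η| = η^2 := by rw [← sq_abs η]; ring
      rw [hQ]
      linear_combination (2 * K * s^(δ-1) * 2 * B * A * M2) * this
    · intro s hs hsr j
      refine (((hG (l+η) s hs j).sub (hG l s hs j)).sub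
        ((h.VV_deriv l (G l) (hG l) s hs j).const_mul η)).congr_deriv ?_
      simp only [g, E, pl, ql, neg_mul]
      ring
    · intro j
      have h1 := ((hC (l+η) j).sub (hC l j)).sub ((h.VV_lim l (G l) C (hC l) j).const_mul η)
      simpa using h1
  rw [hasDerivAt_iff_isLittleO_nhds_zero, Asymptotics.isLittleO_iff]
  intro c hc
  have hmin : 0 < min 1 (1/A) := lt_min one_pos (by positivity)
  have hQW : 0 ≤ 2 * Q * W := by positivity
  have h1 : ∀ᶠ η in 𝓝 (0:ℝ), |η| < min (min 1 (1/A)) (c / (2*Q*W+1)) := by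
    have : Tendsto (fun η : ℝ => |η|) (𝓝 0) (𝓝 0) := by
      simpa using (continuous_abs.tendsto (0:ℝ))
    exact this.eventually (Iio_mem_nhds (lt_min hmin (by positivity)))
  filter_upwards [h1] with η hη
  have h2 := main η (hη.le.trans (min_le_left _ _))
  rw [Real.norm_eq_abs, Real.norm_eq_abs, smul_eq_mul]
  refine h2.trans ?_
  have h3 : |η| ≤ c / (2*Q*W+1) := hη.le.trans (min_le_right _ _)
  rw [le_div_iff₀ (by positivity)] at h3
  rw [← sq_abs η]
  nlinarith [abs_nonneg η]

end TTData

theorem sumsq_scale (f x : Fin 4 → ℝ) : ∑ i, (f i * x i)^2 ≤ (∑ i, f i^2) * ∑ i, x i^2 := by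
  rw [Finset.mul_sum]
  refine Finset.sum_le_sum fun i _ => ?_
  rw [mul_pow]
  exact mul_le_mul_of_nonneg_right
    (Finset.single_le_sum (f := fun i => f i^2) (fun i _ => sq_nonneg _) (Finset.mem_univ i)) (sq_nonneg _)

theorem fin_aux1 : ∀ i : Fin 4, (3 - i - 1 : Fin 4) = 3 - (i+1) := by decide
theorem fin_aux2 : ∀ i : Fin 4, (3 - i + 1 : Fin 4) = 3 - (i-1) := by decide

namespace TTData
variable {γ L : Fin 4 → ℝ} {w v : ℝ → Fin 4 → ℝ}

theorem flow_growth (h : TTData γ L w v) (G : ℝ → ℝ → Fin 4 → ℝ) (C : Fin 4 → ℝ)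
    (hG : ∀ l, CycSol (pl γ w l) (ql γ w l) (G l)) (hC : ∀ l, Lim0 (G l) C) (T : ℝ) :
    ∃ c R0, 0 < c ∧ 0 < R0 ∧ ∀ r, R0 ≤ r → ∀ l0 l, 0 ≤ l0 → l0 ≤ l → l ≤ T →
      ∑ i, G l r i^2 ≤ (∑ i, G l0 r i^2) * Real.exp (c * r * (l - l0)) := by
  obtain ⟨K, R, hK, hR, hvb⟩ := h.hvinf
  have h2 : ∀ᶠ r in atTop, ∀ i, ee w r i ≤ 2 := by
    rw [eventually_all]
    intro i
    exact (h.ee_inf i).eventually (Iic_mem_nhds (by norm_num))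
  obtain ⟨R2, hR2⟩ := eventually_atTop.1 h2
  set A : ℝ := ∑ i, aa γ i with hA
  have haA : ∀ i, aa γ i ≤ A := fun i =>
    Finset.single_le_sum (f := fun i => aa γ i) (fun i _ => (h.aa_pos i).le) (Finset.mem_univ i)
  have hA0 : 0 < A := (h.aa_pos 0).trans_le (haA 0)
  set B := Real.exp (A * |T|) with hB
  have hB0 : 0 < B := Real.exp_pos _
  set Γ0 := ∑ i, |γ i| with hΓ
  have hΓ0 : 0 ≤ Γ0 := Finset.sum_nonneg fun i _ => abs_nonneg _
  refine ⟨2 * (Γ0 + K + 4 * B), max (max R R2) 1, by positivity, by positivity, ?_⟩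
  intro r hr l0 l h0 hl hT
  have hrR : R ≤ r := (le_max_left _ _).trans ((le_max_left _ _).trans hr)
  have hrR2 : R2 ≤ r := (le_max_right _ _).trans ((le_max_left _ _).trans hr)
  have hr1 : 1 ≤ r := (le_max_right _ _).trans hr
  have hr0 : 0 < r := by linarith
  have hT0 : 0 ≤ T := h0.trans (hl.trans hT)
  set c := 2 * (Γ0 + K + 4 * B) * r with hc
  have key := exp_mono (fun l => -∑ i, G l r i^2) _ (-c) l0 l hl
    (fun m _ _ => (sumsq_deriv (fun m i => G m r i) (fun i => VV γ w v m (G m) r i) m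
      (fun i => h.ddl G C hG hC r hr0 m i)).neg) ?_
  · have e1 : Real.exp (c * l) * Real.exp (-c * l) = 1 := by rw [← Real.exp_add]; simp
    have e2 : Real.exp (c * l) * Real.exp (-c * l0) = Real.exp (c * (l - l0)) := by
      rw [← Real.exp_add]; ring_nf
    have e3 := mul_le_mul_of_nonneg_left key (Real.exp_pos (c*l)).le
    rw [← e2]
    calc ∑ i, G l r i^2 = (∑ i, G l r i^2) * (Real.exp (c * l) * Real.exp (-c * l)) := by rw [e1, mul_one]
      _ ≤ _ := by nlinarith
  · intro m hm0 hm1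
    have hmT : |m| ≤ |T| := by
      rw [abs_of_nonneg (h0.trans hm0), abs_of_nonneg hT0]; exact hm1.trans hT
    have hexpB : ∀ c : ℝ, |c| ≤ A → Real.exp (c * m) ≤ B := by
      intro c hc
      apply Real.exp_le_exp.2
      refine (le_abs_self _).trans ?_
      rw [abs_mul]
      exact mul_le_mul hc hmT (abs_nonneg _) hA0.le
    have haabs : ∀ j, |aa γ j| ≤ A := fun j => by rw [abs_of_pos (h.aa_pos j)]; exact haA j
    have hen := cyc_energy (fun i => G m r i) (fun i => r * pl γ w m r i) (fun i => -(r * ql γ w m r i))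
      (fun _ => 0) (2 * B * r) 0 (by positivity) (fun i => by
        simp only [pl]
        rw [abs_mul, abs_mul, abs_of_pos hr0, abs_of_pos (Real.exp_pos _), abs_of_pos (ee_pos _ _ _)]
        have := mul_le_mul (hexpB _ (haabs i)) (hR2 r hrR2 i) (ee_pos _ _ _).le hB0.le
        nlinarith) (fun i => by
        simp only [ql]
        rw [abs_neg, abs_mul, abs_mul, abs_of_pos hr0, abs_of_pos (Real.exp_pos _),
          abs_of_pos (ee_pos _ _ _), ← neg_mul]
        have := mul_le_mul (hexpB (-aa γ i) (by rw [abs_neg]; exact haabs i)) (hR2 r hrR2 i) (ee_pos _ _ _).le hB0.le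
        nlinarith) (fun i => by simp)
    have hdiag : |∑ i, (γ i/2 - v r i) * G m r i^2| ≤ (Γ0 + K) * r * ∑ i, G m r i^2 := by
      refine (Finset.abs_sum_le_sum_abs _ _).trans ?_
      rw [Finset.mul_sum]
      refine Finset.sum_le_sum fun i _ => ?_
      rw [abs_mul, abs_of_nonneg (sq_nonneg (G m r i))]
      refine mul_le_mul_of_nonneg_right ?_ (sq_nonneg _)
      have q1 : |γ i| ≤ Γ0 :=
        Finset.single_le_sum (f := fun i => |γ i|) (fun i _ => abs_nonneg _) (Finset.mem_univ i)
      have q2 := hvb r hrR i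
      have q3 := abs_sub (γ i/2) (v r i)
      have q4 : |γ i/2| ≤ |γ i| := by
        rw [abs_div, abs_two]; linarith [abs_nonneg (γ i)]
      nlinarith
    have hsum : ∑ i, G m r i * VV γ w v m (G m) r i = (∑ i, (γ i/2 - v r i) * G m r i^2) +
        ∑ i, G m r i * (-(r * pl γ w m r i * G m r (i-1) + -(r * ql γ w m r (i+1)) * G m r (i+1)) + 0) := by
      rw [← Finset.sum_add_distrib]
      refine Finset.sum_congr rfl fun i _ => ?_
      simp only [VV]; ring
    have q1 := le_abs_self (∑ i, (γ i/2 - v r i) * G m r i^2)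
    have q2 := (le_abs_self _).trans hen
    simp only [hsum]
    rw [hc]
    nlinarith

/-- rescaled solution -/
theorem F_sol (l : ℝ) (G : ℝ → Fin 4 → ℝ)
    (hG : CycSol (pl γ w l) (ql γ w l) G) :
    CycSol (fun r i => Real.exp l * ee w r i) (fun r i => Real.exp (-l) * ee w r i)
      (fun r i => Real.exp (-(γ i * l/2)) * G r i) := by
  intro r hr i
  refine ((hG r hr i).const_mul (Real.exp (-(γ i * l/2)))).congr_deriv ?_
  simp only [pl, ql]
  have e1 : Real.exp (-(γ i * l/2)) * Real.exp (aa γ i * l) = Real.exp l * Real.exp (-(γ (i-1) * l/2)) := by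
    rw [← Real.exp_add, ← Real.exp_add]
    congr 1; simp only [aa]; ring
  have e2 : Real.exp (-(γ i * l/2)) * Real.exp (-(aa γ (i+1) * l))
      = Real.exp (-l) * Real.exp (-(γ (i+1) * l/2)) := by
    rw [← Real.exp_add, ← Real.exp_add]
    congr 1; simp only [aa, add_sub_cancel_right]; ring
  linear_combination (-(ee w r i * G r (i-1))) * e1 - (ee w r (i+1) * G r (i+1)) * e2

theorem F_lim (l : ℝ) (G : ℝ → Fin 4 → ℝ) (C : Fin 4 → ℝ) (hC : Lim0 G C) :
    Lim0 (fun r i => Real.exp (-(γ i * l/2)) * G r i) (fun i => Real.exp (-(γ i * l/2)) * C i) :=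
  fun i => (hC i).const_mul _

theorem lim_nonneg {X : ℝ → Fin 4 → ℝ} {C : Fin 4 → ℝ} (hC : Lim0 X C)
    (hpos : ∀ r, 0 < r → ∀ i, 0 ≤ X r i) (i : Fin 4) : 0 ≤ C i := by
  apply ge_of_tendsto (hC i)
  filter_upwards [self_mem_nhdsWithin] with r hr
  exact hpos r hr i

theorem flow_decay (h : TTData γ L w v) (l : ℝ) (G : ℝ → Fin 4 → ℝ)
    (hG : CycSol (pl γ w l) (ql γ w l) G) (hpos : ∀ r, 0 < r → ∀ i, 0 ≤ G r i) :
    ∃ D R1, 0 ≤ D ∧ ∀ r, R1 ≤ r → ∑ i, G r i^2 ≤ D * Real.exp (-(2 * r)) := by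
  obtain ⟨D, R1, hD⟩ := pos_decay (ee w) h.ee_inf (Real.exp l) (Real.exp (-l)) (Real.exp_pos _)
    (Real.exp_pos _) _ (F_sol l G hG) (fun r hr i => mul_nonneg (Real.exp_pos _).le (hpos r hr i))
  refine ⟨(∑ i, Real.exp (γ i * l/2)^2) * |D|, max R1 0, by positivity, fun r hr => ?_⟩
  have h1 := hD r ((le_max_left _ _).trans hr)
  have hr0 : 0 ≤ r := (le_max_right _ _).trans hr
  have h2 := sumsq_scale (fun i => Real.exp (γ i * l/2)) (fun i => Real.exp (-(γ i * l/2)) * G r i)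
  have h3 : ∀ i, Real.exp (γ i * l/2) * (Real.exp (-(γ i * l/2)) * G r i) = G r i := by
    intro i
    rw [← mul_assoc, ← Real.exp_add]; simp
  simp only [h3] at h2
  refine h2.trans ?_
  rw [mul_assoc]
  refine mul_le_mul_of_nonneg_left ?_ (by positivity)
  refine h1.trans ?_
  have h4 : 2 ≤ Real.exp l + Real.exp (-l) := by
    have := Real.one_le_cosh l
    rw [Real.cosh_eq] at this; linarith
  calc D * Real.exp (-(Real.exp l + Real.exp (-l)) * r)
      ≤ |D| * Real.exp (-(Real.exp l + Real.exp (-l)) * r) :=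
        mul_le_mul_of_nonneg_right (le_abs_self _) (Real.exp_pos _).le
    _ ≤ |D| * Real.exp (-(2 * r)) := by
        gcongr
        nlinarith

theorem flow_step (h : TTData γ L w v) (l : ℝ) (G : ℝ → Fin 4 → ℝ) (C : Fin 4 → ℝ)
    (hG : CycSol (pl γ w l) (ql γ w l) G) (hC : Lim0 G C) (hC0 : ∀ i, 0 ≤ C i)
    (hdec : ∃ D R1, 0 ≤ D ∧ ∀ r, R1 ≤ r → ∑ i, G r i^2 ≤ D * Real.exp (-r)) :
    ∀ r, 0 < r → ∀ i, 0 ≤ G r i := by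
  obtain ⟨δ, hδ, -, hδa⟩ := h.exists_delta
  have hp : GoodC δ (fun r i => Real.exp l * ee w r i) := (h.ee_good hδa).const_mul _
  have hq : GoodC δ (fun r i => Real.exp (-l) * ee w r i) := (h.ee_good hδa).const_mul _
  obtain ⟨P, CP, hP, hPC, hPpos, hCP⟩ := cyc_exists_pos δ hδ _ _ hp hq
    (fun r _ i => mul_nonneg (Real.exp_pos _).le (ee_pos _ _ _).le)
    (fun r _ i => mul_nonneg (Real.exp_pos _).le (ee_pos _ _ _).le)
  obtain ⟨D, R1, hD0, hD⟩ := hdec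
  have h4 : 1 ≤ Real.exp l + Real.exp (-l) := by
    have := Real.one_le_cosh l
    rw [Real.cosh_eq] at this; linarith
  obtain ⟨t, ht1, ht2⟩ := recessive_unique δ (ee w) h.ee_inf _ _ (Real.exp_pos _) (Real.exp_pos _)
    hp hq _ P _ CP (F_sol l G hG) hP (F_lim l G C hC) hPC hPpos hCP 1 one_pos h4
    ⟨(∑ i, Real.exp (-(γ i * l/2))^2) * D, R1, fun r hr => by
      refine (sumsq_scale _ _).trans ?_
      rw [mul_assoc]
      refine mul_le_mul_of_nonneg_left ?_ (by positivity)
      simpa using hD r hr⟩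
  have hCP0 := lim_nonneg hPC hPpos
  obtain ⟨j, hj⟩ : ∃ j, CP j ≠ 0 := by
    by_contra hh
    push Not at hh
    exact hCP (funext hh)
  have hjpos : 0 < CP j := lt_of_le_of_ne (hCP0 j) (Ne.symm hj)
  have ht0 : 0 ≤ t := by
    have h1 := ht1 j
    have h2 : 0 ≤ t * CP j := by
      rw [← h1]; exact mul_nonneg (Real.exp_pos _).le (hC0 j)
    exact nonneg_of_mul_nonneg_left h2 hjpos
  intro r hr i
  have h1 : 0 ≤ Real.exp (-(γ i * l/2)) * G r i := by
    rw [ht2 r hr i]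
    exact mul_nonneg ht0 (hPpos r hr i)
  exact nonneg_of_mul_nonneg_right h1 (Real.exp_pos _)

theorem flow_main (h : TTData γ L w v) : ∃ (G : ℝ → ℝ → Fin 4 → ℝ) (C : Fin 4 → ℝ),
    (∀ l, CycSol (pl γ w l) (ql γ w l) (G l)) ∧ (∀ l, Lim0 (G l) C) ∧
    (∀ l, 0 ≤ l → ∀ r, 0 < r → ∀ i, 0 ≤ G l r i) ∧ (∀ i, 0 ≤ C i) ∧ C ≠ 0 ∧ ∀ i, C (3 - i) = C i := by
  obtain ⟨δ, hδ, -, hδa⟩ := h.exists_delta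
  obtain ⟨X, C, hX, hXC, hXpos, hC⟩ := cyc_exists_pos δ hδ _ _ (h.pl_good hδa 0) (h.ql_good hδa 0)
    (fun r _ i => mul_nonneg (Real.exp_pos _).le (ee_pos _ _ _).le)
    (fun r _ i => mul_nonneg (Real.exp_pos _).le (ee_pos _ _ _).le)
  have hC0 := lim_nonneg hXC hXpos
  choose G' hG' hGC' using fun l => cyc_exists δ hδ _ _ (h.pl_good hδa l) (h.ql_good hδa l) C
  classical
  let G : ℝ → ℝ → Fin 4 → ℝ := fun l => if l = 0 then X else G' l
  have hG : ∀ l, CycSol (pl γ w l) (ql γ w l) (G l) := by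
    intro l
    by_cases hl : l = 0
    · subst hl; simpa [G] using hX
    · simpa [G, hl] using hG' l
  have hGC : ∀ l, Lim0 (G l) C := by
    intro l
    by_cases hl : l = 0
    · subst hl; simpa [G] using hXC
    · simpa [G, hl] using hGC' l
  have hG0 : G 0 = X := by simp [G]
  refine ⟨G, C, hG, hGC, ?_, hC0, hC, ?_⟩
  · intro T hT
    obtain ⟨c, R0, hc, hR0, hgrow⟩ := h.flow_growth G C hG hGC T
    have hind : ∀ n : ℕ, ∀ l, 0 ≤ l → l ≤ T → l ≤ n * (1/c) → ∀ r, 0 < r → ∀ i, 0 ≤ G l r i := by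
      intro n
      induction n with
      | zero =>
        intro l hl _ hl2
        have : l = 0 := le_antisymm (by simpa using hl2) hl
        subst this
        rw [hG0]; exact hXpos
      | succ n ih =>
        intro l hl hlT hl2
        by_cases hcase : l ≤ n * (1/c)
        · exact ih l hl hlT hcase
        push Not at hcase
        set l0 : ℝ := n * (1/c) with hl0
        have hl00 : 0 ≤ l0 := by positivity
        have hpos0 := ih l0 hl00 (hcase.le.trans hlT) le_rfl
        obtain ⟨D, R1, hD0, hD⟩ := h.flow_decay l0 (G l0) (hG l0) hpos0
        apply h.flow_step l (G l) C (hG l) (hGC l) hC0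
        refine ⟨D, max R0 R1, hD0, fun r hr => ?_⟩
        have h1 := hgrow r ((le_max_left _ _).trans hr) l0 l hl00 hcase.le hlT
        have h2 := hD r ((le_max_right _ _).trans hr)
        have hr0 : 0 < r := hR0.trans_le ((le_max_left _ _).trans hr)
        refine h1.trans ((mul_le_mul_of_nonneg_right h2 (Real.exp_pos _).le).trans ?_)
        rw [mul_assoc, ← Real.exp_add]
        refine mul_le_mul_of_nonneg_left (Real.exp_le_exp.2 ?_) hD0
        have h3 : c * (l - l0) ≤ 1 := by
          have : l - l0 ≤ 1/c := by push_cast at hl2; rw [hl0]; linarith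
          calc c * (l - l0) ≤ c * (1/c) := by gcongr
            _ = 1 := by field_simp
        nlinarith
    obtain ⟨n, hn⟩ := exists_nat_ge (T * c)
    refine hind n T hT le_rfl ?_
    rw [mul_one_div, le_div_iff₀ hc]; exact hn
  · -- symmetry
    have hpl : pl γ w 0 = fun r i => 1 * ee w r i := by funext r i; simp [pl]
    have hql : ql γ w 0 = fun r i => 1 * ee w r i := by funext r i; simp [ql]
    have hgood : GoodC δ (fun r i => 1 * ee w r i) := by rw [← hpl]; exact h.pl_good hδa 0
    have hX1 : CycSol (fun r i => 1 * ee w r i) (fun r i => 1 * ee w r i) X := by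
      have := hX
      rwa [hpl, hql] at this
    have hY : CycSol (fun r i => 1 * ee w r i) (fun r i => 1 * ee w r i) (fun r i => X r (3 - i)) := by
      intro r hr i
      refine (hX1 r hr (3-i)).congr_deriv ?_
      have e1 : ee w r (3 - i) = ee w r (i+1) := by
        simp only [ee, add_sub_cancel_right]
        have a1 : (3 - i - 1 : Fin 4) = 3 - (i+1) := fin_aux1 i
        rw [a1, h.hsymm, h.hsymm, neg_sub_neg]
      have e2 : ee w r (3 - i + 1) = ee w r i := by
        simp only [ee, add_sub_cancel_right]
        have a1 : (3 - i + 1 : Fin 4) = 3 - (i-1) := fin_aux2 i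
        rw [a1, h.hsymm, h.hsymm, neg_sub_neg]
      show -(1 * ee w r (3 - i) * X r (3 - i - 1) + 1 * ee w r (3 - i + 1) * X r (3 - i + 1)) =
        -(1 * ee w r i * X r (3 - (i - 1)) + 1 * ee w r (i + 1) * X r (3 - (i + 1)))
      rw [e1, e2]
      have a1 : (3 - i + 1 : Fin 4) = 3 - (i-1) := fin_aux2 i
      have a2 : (3 - i - 1 : Fin 4) = 3 - (i+1) := fin_aux1 i
      rw [a1, a2]; ring
    obtain ⟨D, R1, hD⟩ := pos_decay (ee w) h.ee_inf 1 1 one_pos one_pos _ hY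
      (fun r hr i => hXpos r hr _)
    obtain ⟨t, ht, -⟩ := recessive_unique δ (ee w) h.ee_inf 1 1 one_pos one_pos hgood hgood
      _ X (fun i => C (3 - i)) C hY hX1 (fun i => hXC (3 - i)) hXC hXpos hC (1+1) (by norm_num) le_rfl
      ⟨D, R1, hD⟩
    have hs : ∑ i : Fin 4, C (3 - i) = ∑ i, C i := Equiv.sum_comp (Equiv.subLeft (3 : Fin 4)) C
    have hs2 : ∑ i : Fin 4, C (3 - i) = t * ∑ i, C i := by
      rw [Finset.mul_sum]; exact Finset.sum_congr rfl fun i _ => ht i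
    have hpos : 0 < ∑ i, C i := by
      rcases (Finset.sum_nonneg fun i (_ : i ∈ Finset.univ) => hC0 i).lt_or_eq with h | h
      · exact h
      · exact absurd (funext fun i =>
          (Finset.sum_eq_zero_iff_of_nonneg (fun i _ => hC0 i)).1 h.symm i (Finset.mem_univ i)) hC
    have ht1 : t = 1 := by
      rw [hs] at hs2
      have : (t - 1) * ∑ i, C i = 0 := by linarith
      rcases mul_eq_zero.1 this with h | h
      · linarith
      · exact absurd h hpos.ne'
    intro i
    rw [ht i, ht1, one_mul]

end TTData

namespace TTData
variable {γ L : Fin 4 → ℝ} {w v : ℝ → Fin 4 → ℝ}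

theorem limit_system (h : TTData γ L w v) : ∃ (Ψ : ℝ → Fin 4 → ℝ) (D : Fin 4 → ℝ),
    (∀ s, 0 < s → ∀ i, HasDerivAt (fun t => Ψ t i) (-(s^(aa γ i - 1) * Ψ s (i-1))) s) ∧
    Lim0 Ψ D ∧ (∀ s, 0 < s → ∀ i, 0 ≤ Ψ s i) ∧ (∀ i, 0 ≤ D i) ∧ D ≠ 0 ∧
    ∀ i, D (3 - i) * Real.exp (L (3-i)/2) = D i * Real.exp (L i/2) := by
  obtain ⟨δ, hδ, -, hδa⟩ := h.exists_delta
  obtain ⟨G, C, hG, hGC, hGpos, hC0, hCne, hCsymm⟩ := h.flow_main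
  set κ : Fin 4 → ℝ := fun i => Real.exp ((L i - L (i-1))/2) with hκ
  have hκ0 : ∀ i, 0 < κ i := fun i => Real.exp_pos _
  have hN : ∀ S : ℝ, 0 < S → ∃ N, 0 ≤ N ∧ ∀ s, 0 < s → s ≤ S → ∀ i, s^(aa γ i - 1) ≤ N * s^(δ-1) := by
    intro S hS
    refine ⟨∑ i, S^(aa γ i - δ), by positivity, fun s hs hsS i => ?_⟩
    have h1 : s^(aa γ i - 1) = s^(aa γ i - δ) * s^(δ-1) := by
      rw [← Real.rpow_add hs]; ring_nf
    rw [h1]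
    refine mul_le_mul_of_nonneg_right ?_ (by positivity)
    exact (Real.rpow_le_rpow hs.le hsS (by linarith [hδa i])).trans
      (Finset.single_le_sum (f := fun i => S^(aa γ i - δ)) (fun i _ => by positivity) (Finset.mem_univ i))
  have hpw : GoodC δ (fun s i => s^(aa γ i - 1)) := by
    refine ⟨fun i s hs => (Real.continuousAt_rpow_const s _
      (Or.inl (ne_of_gt hs))).continuousWithinAt, fun S hS => ?_⟩
    obtain ⟨N, hN0, hN⟩ := hN S hS
    refine ⟨N, hN0, fun s hs hsS i => ?_⟩
    rw [abs_of_nonneg (by positivity)]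
    exact hN s hs hsS i
  have hgp : GoodC δ (fun s i => κ i * s^(aa γ i - 1)) := hpw.const_mul κ
  have hgq : GoodC δ (fun s i => (0:ℝ) * s^(aa γ i - 1)) := hpw.const_mul (fun _ => 0)
  obtain ⟨Φ, hΦ, hΦC⟩ := cyc_exists δ hδ _ _ hgp hgq C
  have hΦpos : ∀ S, 0 < S → ∀ i, 0 ≤ Φ S i := by
    intro S hS i
    obtain ⟨M, hM, hMb⟩ := bounded_near Φ C hΦ.cont hΦC S
    obtain ⟨N, hN0, hN⟩ := hN S hS
    set κm : ℝ := ∑ i, κ i with hκm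
    have hκm0 : ∀ i, κ i ≤ κm := fun i =>
      Finset.single_le_sum (f := κ) (fun i _ => (hκ0 i).le) (Finset.mem_univ i)
    have hκmp : 0 < κm := (hκ0 0).trans_le (hκm0 0)
    set K : ℝ := N * (κm + 1) with hK
    set W : ℝ := Real.sqrt (Real.exp ((4*K+1) * S^δ/δ)) with hW
    have hW0 : 0 ≤ W := Real.sqrt_nonneg _
    have main : ∀ η : ℝ, 0 < η → η ≤ 1 → -(4 * (N * M) * W * η) ≤ Φ S i := by
      intro η hη hη1
      have hm : ∀ᶠ ρ in 𝓝[>] (0:ℝ), ∀ j, |ee w ρ j * ρ^(1 - aa γ j) - κ j| ≤ η := by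
        rw [eventually_all]
        intro j
        have h1 := ((h.ee_zero j).sub_const (κ j)).abs
        rw [hκ] at h1
        simp only [sub_self, abs_zero] at h1
        exact h1.eventually (Iic_mem_nhds hη)
      rw [eventually_nhdsWithin_iff, Metric.eventually_nhds_iff] at hm
      obtain ⟨ρ0, hρ0, hm⟩ := hm
      have ht1 : Tendsto (fun l : ℝ => S * Real.exp (-l)) atTop (𝓝 0) := by
        simpa using (Real.tendsto_exp_neg_atTop_nhds_zero).const_mul S
      have ht2 : ∀ j, Tendsto (fun l : ℝ => Real.exp (-(2 * aa γ j * l)) * (κm + 1)) atTop (𝓝 0) := by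
        intro j
        have h1 : Tendsto (fun l : ℝ => 2 * aa γ j * l) atTop atTop :=
          tendsto_id.const_mul_atTop (by have := h.aa_pos j; positivity)
        simpa using (Real.tendsto_exp_neg_atTop_nhds_zero.comp h1).mul_const (κm + 1)
      have hev : ∀ᶠ l : ℝ in atTop, S * Real.exp (-l) < ρ0 ∧
          (∀ j, Real.exp (-(2 * aa γ j * l)) * (κm + 1) ≤ η) ∧ 0 ≤ l :=
        (ht1.eventually (Iio_mem_nhds hρ0)).and ((eventually_all.2 fun j =>
          (ht2 j).eventually (Iic_mem_nhds hη)).and (eventually_ge_atTop 0))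
      obtain ⟨l, hl1, hl2, hl0⟩ := hev.exists
      let m : ℝ → Fin 4 → ℝ := fun s j =>
        ee w (s * Real.exp (-l)) j * (s * Real.exp (-l))^(1 - aa γ j)
      have hmb : ∀ s, 0 < s → s ≤ S → ∀ j, |m s j - κ j| ≤ η := by
        intro s hs hsS j
        have hpos : 0 < s * Real.exp (-l) := by positivity
        refine hm ?_ hpos j
        rw [Real.dist_eq, sub_zero, abs_of_pos hpos]
        exact lt_of_le_of_lt (mul_le_mul_of_nonneg_right hsS (Real.exp_pos _).le) hl1
      have hm0 : ∀ s, 0 < s → ∀ j, 0 ≤ m s j := fun s hs j =>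
        mul_nonneg (ee_pos _ _ _).le (by positivity)
      have hmle : ∀ s, 0 < s → s ≤ S → ∀ j, m s j ≤ κm + 1 := by
        intro s hs hsS j
        have := (abs_le.1 (hmb s hs hsS j)).2
        linarith [hκm0 j]
      have hPid : ∀ s, 0 < s → ∀ j, Real.exp (-l) * pl γ w l (s * Real.exp (-l)) j
          = m s j * s^(aa γ j - 1) := by
        intro s hs j
        simp only [m, pl]
        rw [Real.mul_rpow hs.le (Real.exp_pos _).le, ← Real.exp_mul]
        have e1 : s^(1 - aa γ j) * s^(aa γ j - 1) = 1 := by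
          rw [← Real.rpow_add hs]; simp
        have e2 : Real.exp (-l) * Real.exp (aa γ j * l) = Real.exp (-l * (1 - aa γ j)) := by
          rw [← Real.exp_add]; ring_nf
        linear_combination (ee w (s * Real.exp (-l)) j) * e2 -
          (ee w (s * Real.exp (-l)) j * Real.exp (-l * (1 - aa γ j))) * e1
      have hQid : ∀ s, 0 < s → ∀ j, Real.exp (-l) * ql γ w l (s * Real.exp (-l)) j
          = Real.exp (-(2 * aa γ j * l)) * m s j * s^(aa γ j - 1) := by
        intro s hs j
        rw [mul_assoc, ← hPid s hs j]
        simp only [pl, ql]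
        have e2 : Real.exp (-(2 * aa γ j * l)) * Real.exp (aa γ j * l) = Real.exp (-(aa γ j * l)) := by
          rw [← Real.exp_add]; ring_nf
        rw [← e2]; ring
      have hqle : ∀ s, 0 < s → s ≤ S → ∀ j, Real.exp (-(2 * aa γ j * l)) * m s j ≤ η := by
        intro s hs hsS j
        exact (mul_le_mul_of_nonneg_left (hmle s hs hsS j) (Real.exp_pos _).le).trans (hl2 j)
      let P : ℝ → Fin 4 → ℝ := fun s j => m s j * s^(aa γ j - 1)
      let Q : ℝ → Fin 4 → ℝ := fun s j => Real.exp (-(2 * aa γ j * l)) * m s j * s^(aa γ j - 1)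
      let g : ℝ → Fin 4 → ℝ := fun s j =>
        -((m s j - κ j) * s^(aa γ j - 1) * Φ s (j-1)) - Q s (j+1) * Φ s (j+1)
      have hQη : ∀ s, 0 < s → s ≤ S → ∀ j, |Q s j| ≤ η * (N * s^(δ-1)) := by
        intro s hs hsS j
        rw [abs_of_nonneg (mul_nonneg (mul_nonneg (Real.exp_pos _).le (hm0 s hs j)) (by positivity))]
        exact mul_le_mul (hqle s hs hsS j) (hN s hs hsS j) (by positivity) hη.le
      let E : ℝ → Fin 4 → ℝ := fun s j => G l (s * Real.exp (-l)) j - Φ s j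
      have hgr := cyc_gronwall δ S K (2 * (N * M) * η) hδ (by positivity) (by positivity)
        P Q g E ?_ ?_ ?_ ?_ ?_ S hS le_rfl
      · have h1 : E S i^2 ≤ ∑ j, E S j^2 :=
          Finset.single_le_sum (f := fun j => E S j^2) (fun j _ => sq_nonneg _) (Finset.mem_univ i)
        have h2 : |E S i| ≤ 4 * (N * M) * W * η := by
          apply abs_le_of_sq_le_sq _ (by positivity)
          refine h1.trans (hgr.trans (le_of_eq ?_))
          have : W^2 = Real.exp ((4*K+1) * S^δ/δ) := Real.sq_sqrt (Real.exp_pos _).le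
          rw [← this]; ring
        have h3 := (abs_le.1 h2).2
        have h4 := hGpos l hl0 (S * Real.exp (-l)) (by positivity) i
        simp only [E] at h3
        linarith
      · intro s hs hsS j
        simp only [P]
        rw [abs_of_nonneg (mul_nonneg (hm0 s hs j) (by positivity))]
        calc m s j * s^(aa γ j - 1) ≤ (κm + 1) * (N * s^(δ-1)) :=
              mul_le_mul (hmle s hs hsS j) (hN s hs hsS j) (by positivity) (by positivity)
          _ = K * s^(δ-1) := by rw [hK]; ring
      · intro s hs hsS j
        refine (hQη s hs hsS j).trans ?_
        rw [hK]
        have : 0 ≤ N * s^(δ-1) := by positivity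
        nlinarith
      · intro s hs hsS j
        refine (abs_sub _ _).trans ?_
        rw [abs_neg, abs_mul, abs_mul, abs_mul, abs_of_nonneg (a := s^(aa γ j - 1)) (by positivity)]
        have t1 : |m s j - κ j| * s^(aa γ j - 1) * |Φ s (j-1)| ≤ η * (N * s^(δ-1)) * M :=
          mul_le_mul (mul_le_mul (hmb s hs hsS j) (hN s hs hsS j) (by positivity) hη.le)
            (hMb s hs hsS _) (abs_nonneg _) (by positivity)
        have t2 : |Q s (j+1)| * |Φ s (j+1)| ≤ η * (N * s^(δ-1)) * M :=
          mul_le_mul (hQη s hs hsS _) (hMb s hs hsS _) (abs_nonneg _) (by positivity)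
        calc _ ≤ η * (N * s^(δ-1)) * M + η * (N * s^(δ-1)) * M := add_le_add t1 t2
          _ = _ := by ring
      · intro s hs hsS j
        have hpos : 0 < s * Real.exp (-l) := by positivity
        have d1 : HasDerivAt (fun t : ℝ => t * Real.exp (-l)) (1 * Real.exp (-l)) s :=
          (hasDerivAt_id s).mul_const _
        have d2 := (hG l _ hpos j).comp s d1
        refine (d2.sub (hΦ s hs j)).congr_deriv ?_
        have i1 := hPid s hs j
        have i2 := hQid s hs (j+1)
        simp only [g, E, P, Q]
        linear_combination (-G l (s * Real.exp (-l)) (j-1)) * i1 - (G l (s * Real.exp (-l)) (j+1)) * i2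
      · intro j
        have d1 : Tendsto (fun t : ℝ => t * Real.exp (-l)) (𝓝[>] 0) (𝓝[>] 0) := by
          apply tendsto_nhdsWithin_of_tendsto_nhds_of_eventually_within
          · have : Tendsto (fun t : ℝ => t * Real.exp (-l)) (𝓝 0) (𝓝 (0 * Real.exp (-l))) :=
              tendsto_id.mul_const _
            rw [zero_mul] at this
            exact this.mono_left nhdsWithin_le_nhds
          · filter_upwards [self_mem_nhdsWithin] with t ht
            exact mul_pos ht (Real.exp_pos _)
        have := ((hGC l j).comp d1).sub (hΦC j)
        rw [sub_self] at this
        exact this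
    apply le_of_forall_pos_le_add
    intro ε hε
    have hNMW : 0 ≤ 4 * (N * M) * W := by positivity
    have h1 := main (min 1 (ε / (4 * (N * M) * W + 1))) (lt_min one_pos (by positivity)) (min_le_left _ _)
    have h2 : 4 * (N * M) * W * min 1 (ε / (4 * (N * M) * W + 1)) ≤ ε := by
      calc _ ≤ (4 * (N * M) * W + 1) * (ε / (4 * (N * M) * W + 1)) := by
            refine mul_le_mul (by linarith) (min_le_right _ _) (le_min zero_le_one (by positivity)) (by positivity)
        _ = ε := by field_simp
    linarith
  refine ⟨fun s i => Real.exp (-(L i/2)) * Φ s i, fun i => Real.exp (-(L i/2)) * C i,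
    ?_, ?_, ?_, ?_, ?_, ?_⟩
  · intro s hs i
    refine ((hΦ s hs i).const_mul (Real.exp (-(L i/2)))).congr_deriv ?_
    have e1 : Real.exp (-(L i/2)) * κ i = Real.exp (-(L (i-1)/2)) := by
      rw [hκ]; simp only
      rw [← Real.exp_add]; ring_nf
    simp only
    linear_combination (-(s^(aa γ i - 1) * Φ s (i-1))) * e1
  · intro i
    exact (hΦC i).const_mul _
  · intro s hs i
    exact mul_nonneg (Real.exp_pos _).le (hΦpos s hs i)
  · intro i
    exact mul_nonneg (Real.exp_pos _).le (hC0 i)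
  · intro h0
    apply hCne
    funext i
    have := congrFun h0 i
    simp only [Pi.zero_apply, mul_eq_zero, (Real.exp_pos _).ne', false_or] at this
    exact this
  · intro i
    have : ∀ x y : ℝ, Real.exp (-x) * y * Real.exp x = y := by
      intro x y
      rw [mul_right_comm, ← Real.exp_add]; simp
    simp only [this]
    exact hCsymm i

end TTData

theorem integral_Ioi_limits (f f' : ℝ → ℝ) (l m : ℝ)
    (hd : ∀ s, 0 < s → HasDerivAt f (f' s) s) (hi : IntegrableOn f' (Ioi 0))
    (h0 : Tendsto f (𝓝[>] 0) (𝓝 l)) (hinf : Tendsto f atTop (𝓝 m)) :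
    ∫ s in Ioi 0, f' s = m - l := by
  have hne : ∀ s : ℝ, 0 < s → Function.update f 0 l =ᶠ[𝓝 s] f := by
    intro s hs
    filter_upwards [Ioi_mem_nhds hs] with t ht
    rw [Function.update_of_ne (ne_of_gt ht)]
  have := integral_Ioi_of_hasDerivAt_of_tendsto (f := Function.update f 0 l) (f' := f') (a := 0) (m := m)
    ?_ ?_ hi ?_
  · simpa using this
  · rw [continuousWithinAt_update_same]
    refine h0.mono_left (nhdsWithin_mono _ ?_)
    intro t ht
    exact lt_of_le_of_ne ht.1 (Ne.symm ht.2)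
  · intro s hs
    exact (hd s hs).congr_of_eventuallyEq (hne s hs)
  · refine hinf.congr' ?_
    filter_upwards [eventually_gt_atTop 0] with t ht
    rw [Function.update_of_ne (ne_of_gt ht)]

/-- the Mellin transform of the components -/
noncomputable def KK (Ψ : ℝ → Fin 4 → ℝ) (i : Fin 4) (p : ℝ) : ℝ := ∫ s in Ioi 0, s^(p-1) * Ψ s i

structure MData (γ : Fin 4 → ℝ) (Ψ : ℝ → Fin 4 → ℝ) (D : Fin 4 → ℝ) : Prop where
  ha : ∀ i, 0 < aa γ i
  hd : ∀ s, 0 < s → ∀ i, HasDerivAt (fun t => Ψ t i) (-(s^(aa γ i - 1) * Ψ s (i-1))) s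
  h0 : Lim0 Ψ D
  hpos : ∀ s, 0 < s → ∀ i, 0 ≤ Ψ s i
  hD0 : ∀ i, 0 ≤ D i
  hD : D ≠ 0

namespace MData
variable {γ D : Fin 4 → ℝ} {Ψ : ℝ → Fin 4 → ℝ}

theorem cont (h : MData γ Ψ D) (i : Fin 4) : ContinuousOn (fun s => Ψ s i) (Ioi 0) :=
  fun s hs => (h.hd s hs i).continuousAt.continuousWithinAt

theorem anti (h : MData γ Ψ D) (i : Fin 4) : AntitoneOn (fun s => Ψ s i) (Ioi 0) := by
  apply antitoneOn_of_deriv_nonpos (convex_Ioi 0) (h.cont i)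
  · intro s hs
    rw [interior_Ioi] at hs
    exact (h.hd s hs i).differentiableAt.differentiableWithinAt
  · intro s hs
    rw [interior_Ioi] at hs
    rw [(h.hd s hs i).deriv]
    have hs' : (0:ℝ) < s := hs
    have := mul_nonneg (Real.rpow_nonneg hs'.le (aa γ i - 1)) (h.hpos s hs (i-1))
    linarith

theorem le_D (h : MData γ Ψ D) (i : Fin 4) (s : ℝ) (hs : 0 < s) : Ψ s i ≤ D i := by
  apply ge_of_tendsto (h.h0 i)
  filter_upwards [Ioc_mem_nhdsGT hs] with t ht
  exact h.anti i ht.1 hs ht.2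

theorem decay (h : MData γ Ψ D) (i : Fin 4) (p : ℝ) :
    (fun s => s^p * Ψ s i) =O[atTop] fun s => Real.exp (-(1/4) * s) := by
  let φ : ℝ → Fin 4 → ℝ := fun s j => s^(-(γ j/2)) * Ψ s j
  have hφd : ∀ s, 0 < s → ∀ j, HasDerivAt (fun t => φ t j) (-(γ j/2)/s * φ s j - φ s (j-1)) s := by
    intro s hs j
    have h1 : HasDerivAt (fun t : ℝ => t^(-(γ j/2))) (-(γ j/2) * s^(-(γ j/2) - 1)) s :=
      Real.hasDerivAt_rpow_const (Or.inl hs.ne')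
    refine (h1.mul (h.hd s hs j)).congr_deriv ?_
    simp only [φ]
    have e1 : s^(-(γ j/2)) * s^(aa γ j - 1) = s^(-(γ (j-1)/2)) := by
      rw [← Real.rpow_add hs]; congr 1; simp only [aa]; ring
    rw [Real.rpow_sub_one hs.ne', ← e1]
    field_simp
    ring
  set Γ0 : ℝ := ∑ j, |γ j| with hΓ0
  have hΓ : 0 ≤ Γ0 := Finset.sum_nonneg fun i _ => abs_nonneg _
  set s0 : ℝ := Γ0 + 1 with hs0
  have hs0p : 0 < s0 := by positivity
  have hφpos : ∀ s, 0 < s → ∀ j, 0 ≤ φ s j := fun s hs j =>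
    mul_nonneg (Real.rpow_nonneg hs.le _) (h.hpos s hs j)
  have hσ : ∀ s, s0 ≤ s → (∑ j, φ s j) ≤ (∑ j, φ s0 j) * Real.exp (1/2 * s0) * Real.exp (-(1/2) * s) := by
    intro s hs
    have key := exp_mono (fun s => -∑ j, φ s j) (fun s => -∑ j, (-(γ j/2)/s * φ s j - φ s (j-1))) (1/2) s0 s hs
      (fun t ht _ => (HasDerivAt.fun_sum fun j _ => hφd t (hs0p.trans_le ht) j).neg) ?_
    · have e1 : Real.exp (1/2 * s) * Real.exp (-(1/2) * s) = 1 := by rw [← Real.exp_add]; simp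
      have e3 := mul_le_mul_of_nonneg_right key (Real.exp_pos (-(1/2) * s)).le
      calc (∑ j, φ s j) = (∑ j, φ s j) * (Real.exp (1/2 * s) * Real.exp (-(1/2) * s)) := by rw [e1, mul_one]
        _ ≤ _ := by linarith
    · intro t ht _
      have ht0 : 0 < t := hs0p.trans_le ht
      rw [Finset.sum_sub_distrib]
      have e1 : ∑ j : Fin 4, φ t (j-1) = ∑ j, φ t j :=
        Equiv.sum_comp (Equiv.subRight (1 : Fin 4)) (fun j => φ t j)
      have e2 : ∑ j, -(γ j/2)/t * φ t j ≤ (1/2) * ∑ j, φ t j := by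
        rw [Finset.mul_sum]
        refine Finset.sum_le_sum fun j _ => mul_le_mul_of_nonneg_right ?_ (hφpos t ht0 j)
        rw [div_le_iff₀ ht0]
        have q1 : |γ j| ≤ Γ0 :=
          Finset.single_le_sum (f := fun i => |γ i|) (fun i _ => abs_nonneg _) (Finset.mem_univ j)
        have := neg_abs_le (γ j)
        linarith
      rw [e1]
      linarith
  have hO1 : (fun s => φ s i) =O[atTop] fun s => Real.exp (-(1/2) * s) := by
    apply Asymptotics.IsBigO.of_bound ((∑ j, φ s0 j) * Real.exp (1/2 * s0))
    filter_upwards [eventually_ge_atTop s0] with s hs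
    have hsp : 0 < s := hs0p.trans_le hs
    rw [Real.norm_of_nonneg (hφpos s hsp i), Real.norm_of_nonneg (Real.exp_pos _).le]
    exact (Finset.single_le_sum (f := fun j => φ s j) (fun j _ => hφpos s hsp j) (Finset.mem_univ i)).trans (hσ s hs)
  have hO2 : (fun s : ℝ => s^(p + γ i/2)) =O[atTop] fun s => Real.exp (1/4 * s) :=
    (isLittleO_rpow_exp_pos_mul_atTop _ (by norm_num)).isBigO
  refine (hO2.mul hO1).congr' ?_ ?_
  · filter_upwards [eventually_gt_atTop 0] with s hs
    simp only [φ]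
    rw [← mul_assoc, ← Real.rpow_add hs]
    congr 2; ring
  · filter_upwards with s
    rw [← Real.exp_add]; congr 1; ring

theorem tendsto_inf (h : MData γ Ψ D) (i : Fin 4) (p : ℝ) :
    Tendsto (fun s => s^p * Ψ s i) atTop (𝓝 0) := by
  refine (h.decay i p).trans_tendsto ?_
  have : Tendsto (fun s : ℝ => 1/4 * s) atTop atTop := tendsto_id.const_mul_atTop (by norm_num)
  refine (Real.tendsto_exp_neg_atTop_nhds_zero.comp this).congr fun s => ?_
  simp

theorem integrable (h : MData γ Ψ D) (i : Fin 4) (p : ℝ) (hp : 0 < p) :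
    IntegrableOn (fun s => s^(p-1) * Ψ s i) (Ioi 0) := by
  have hc1 : ContinuousOn (fun s : ℝ => s^(p-1)) (Ioi 0) :=
    fun s hs => (Real.continuousAt_rpow_const s _ (Or.inl (ne_of_gt hs))).continuousWithinAt
  have hc : ContinuousOn (fun s => s^(p-1) * Ψ s i) (Ioi 0) := hc1.mul (h.cont i)
  rw [← Ioc_union_Ioi_eq_Ioi (zero_le_one (α := ℝ))]
  apply IntegrableOn.union
  · have h1 : IntegrableOn (fun s : ℝ => s^(p-1) * D i) (Ioc 0 1) :=
      ((intervalIntegrable_iff_integrableOn_Ioc_of_le zero_le_one).1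
        (intervalIntegral.intervalIntegrable_rpow' (by linarith))).mul_const _
    refine Integrable.mono' h1 ((hc.mono Ioc_subset_Ioi_self).aestronglyMeasurable measurableSet_Ioc) ?_
    refine (ae_restrict_iff' measurableSet_Ioc).2 (Eventually.of_forall fun s hs => ?_)
    rw [Real.norm_of_nonneg (mul_nonneg (Real.rpow_nonneg hs.1.le _) (h.hpos s hs.1 i))]
    exact mul_le_mul_of_nonneg_left (h.le_D i s hs.1) (Real.rpow_nonneg hs.1.le _)
  · exact integrable_of_isBigO_exp_neg (b := 1/4) (by norm_num)
      (hc.mono fun s hs => show (0:ℝ) < s from lt_of_lt_of_le one_pos hs) (h.decay i (p-1))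

theorem D_eq (h : MData γ Ψ D) (i : Fin 4) : D i = KK Ψ (i-1) (aa γ i) := by
  have h1 := integral_Ioi_limits (fun s => Ψ s i) _ (D i) 0 (fun s hs => h.hd s hs i)
    (h.integrable (i-1) (aa γ i) (h.ha i)).neg (h.h0 i) (by simpa using h.tendsto_inf i 0)
  rw [integral_neg] at h1
  simp only [KK]; linarith

theorem KK_rec (h : MData γ Ψ D) (i : Fin 4) (p : ℝ) (hp : 0 < p) :
    p * KK Ψ i p = KK Ψ (i-1) (p + aa γ i) := by
  have i1 := (h.integrable i p hp).const_mul p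
  have i2 := h.integrable (i-1) (p + aa γ i) (by linarith [h.ha i])
  have h1 := integral_Ioi_limits (fun s => s^p * Ψ s i)
    (fun s => p * (s^(p-1) * Ψ s i) - s^(p + aa γ i - 1) * Ψ s (i-1)) 0 0 (fun s hs => by
      refine ((Real.hasDerivAt_rpow_const (p := p) (Or.inl hs.ne')).mul (h.hd s hs i)).congr_deriv ?_
      have e1 : s^(p + aa γ i - 1) = s^p * s^(aa γ i - 1) := by
        rw [← Real.rpow_add hs]; congr 1; ring
      rw [e1]; ring)
    (i1.sub i2) ?_ (h.tendsto_inf i p)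
  · have e1 : ∫ s in Ioi 0, (p * (s^(p-1) * Ψ s i) - s^(p + aa γ i - 1) * Ψ s (i-1)) =
        (∫ s in Ioi 0, p * (s^(p-1) * Ψ s i)) - ∫ s in Ioi 0, s^(p + aa γ i - 1) * Ψ s (i-1) :=
      integral_sub i1 i2
    rw [e1, integral_const_mul] at h1
    simp only [KK]; linarith
  · have h2 : Tendsto (fun s : ℝ => s^p) (𝓝[>] 0) (𝓝 0) := by
      have h1 : ContinuousAt (fun x : ℝ => x^p) 0 := Real.continuousAt_rpow_const 0 p (Or.inr hp.le)
      have h2 := h1.tendsto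
      rw [Real.zero_rpow hp.ne'] at h2
      exact h2.mono_left nhdsWithin_le_nhds
    simpa using h2.mul (h.h0 i)

theorem KK_pos_of (h : MData γ Ψ D) (i : Fin 4) (hi : ∃ s, 0 < s ∧ 0 < Ψ s i) (p : ℝ) (hp : 0 < p) :
    0 < KK Ψ i p := by
  obtain ⟨s0, hs0, hΨ⟩ := hi
  have h1 : ∫ s in Ioc 0 s0, s^(p-1) * Ψ s i ≤ KK Ψ i p := by
    apply setIntegral_mono_set (h.integrable i p hp)
    · refine (ae_restrict_iff' measurableSet_Ioi).2 (Eventually.of_forall fun s hs => ?_)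
      exact mul_nonneg (Real.rpow_nonneg (le_of_lt hs) _) (h.hpos s hs i)
    · exact Ioc_subset_Ioi_self.eventuallyLE
  have i1 : IntegrableOn (fun s : ℝ => s^(p-1) * Ψ s0 i) (Ioc 0 s0) :=
      ((intervalIntegrable_iff_integrableOn_Ioc_of_le hs0.le).1
        (intervalIntegral.intervalIntegrable_rpow' (by linarith))).mul_const _
  have h2 : ∫ s in Ioc 0 s0, s^(p-1) * Ψ s0 i ≤ ∫ s in Ioc 0 s0, s^(p-1) * Ψ s i := by
    apply setIntegral_mono_on i1 ((h.integrable i p hp).mono_set Ioc_subset_Ioi_self) measurableSet_Ioc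
    intro s hs
    exact mul_le_mul_of_nonneg_left (h.anti i hs.1 hs0 hs.2) (Real.rpow_nonneg hs.1.le _)
  have h3 : ∫ s in Ioc 0 s0, s^(p-1) * Ψ s0 i = s0^p/p * Ψ s0 i := by
    rw [integral_mul_const, ← intervalIntegral.integral_of_le hs0.le, integral_rpow (Or.inl (by linarith))]
    simp [Real.zero_rpow hp.ne']
  have h4 : 0 < s0^p/p * Ψ s0 i := by positivity
  linarith

theorem pos_prev (h : MData γ Ψ D) (i : Fin 4) (hi : ∃ s, 0 < s ∧ 0 < Ψ s i) :
    ∃ s, 0 < s ∧ 0 < Ψ s (i-1) := by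
  have h1 := h.KK_pos_of i hi 1 one_pos
  rw [← one_mul (KK Ψ i 1), h.KK_rec i 1 one_pos] at h1
  by_contra hh
  push Not at hh
  have : KK Ψ (i-1) (1 + aa γ i) = 0 := by
    simp only [KK]
    rw [setIntegral_congr_fun (g := fun _ => (0:ℝ)) measurableSet_Ioi]
    · simp
    · intro s hs
      simp only
      rw [le_antisymm (hh s hs) (h.hpos s hs _), mul_zero]
  linarith

theorem KK_pos (h : MData γ Ψ D) (i : Fin 4) (p : ℝ) (hp : 0 < p) : 0 < KK Ψ i p := by
  obtain ⟨j, hj⟩ : ∃ j, D j ≠ 0 := by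
    by_contra hh
    push Not at hh
    exact h.hD (funext hh)
  have hjpos : 0 < D j := lt_of_le_of_ne (h.hD0 j) (Ne.symm hj)
  have hx : ∃ s, 0 < s ∧ 0 < Ψ s j := by
    have h1 := (h.h0 j).eventually (lt_mem_nhds hjpos)
    obtain ⟨s, hs, hs'⟩ := (h1.and self_mem_nhdsWithin).exists
    exact ⟨s, hs', hs⟩
  have h1 := h.pos_prev _ hx
  have h2 := h.pos_prev _ h1
  have h3 := h.pos_prev _ h2
  have hall : ∀ i j : Fin 4, i = j ∨ i = j - 1 ∨ i = j - 1 - 1 ∨ i = j - 1 - 1 - 1 := by decide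
  rcases hall i j with e | e | e | e <;> subst e
  · exact h.KK_pos_of _ hx p hp
  · exact h.KK_pos_of _ h1 p hp
  · exact h.KK_pos_of _ h2 p hp
  · exact h.KK_pos_of _ h3 p hp

theorem KK_logconvex (h : MData γ Ψ D) (i : Fin 4) :
    ConvexOn ℝ (Ioi 0) (fun p => Real.log (KK Ψ i p)) := by
  refine ⟨convex_Ioi 0, fun p hp q hq a b ha hb hab => ?_⟩
  have hp' : (0:ℝ) < p := hp
  have hq' : (0:ℝ) < q := hq
  simp only [smul_eq_mul]
  have hA := h.KK_pos i p hp
  have hB := h.KK_pos i q hq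
  have hm : 0 < a * p + b * q := (convex_Ioi (0:ℝ)) hp hq ha hb hab
  set A := KK Ψ i p with hAdef
  set B := KK Ψ i q with hBdef
  have hAB : 0 < A^a * B^b := by positivity
  have hle : KK Ψ i (a*p + b*q) ≤ A^a * B^b := by
    have i1 := (h.integrable i p hp).const_mul (A^a * B^b * (a/A))
    have i2 := (h.integrable i q hq).const_mul (A^a * B^b * (b/B))
    have h1 : KK Ψ i (a*p + b*q) ≤ ∫ s in Ioi 0, (A^a * B^b * (a/A) * (s^(p-1) * Ψ s i)
        + A^a * B^b * (b/B) * (s^(q-1) * Ψ s i)) := by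
      apply setIntegral_mono_on (h.integrable i _ hm) (i1.add i2) measurableSet_Ioi
      intro s hs
      have hs' : (0:ℝ) < s := hs
      have g1 := Real.geom_mean_le_arith_mean2_weighted ha hb
        (show 0 ≤ s^(p-1)/A by positivity) (show 0 ≤ s^(q-1)/B by positivity) hab
      rw [Real.div_rpow (by positivity) hA.le, Real.div_rpow (by positivity) hB.le,
        ← Real.rpow_mul hs'.le, ← Real.rpow_mul hs'.le, div_mul_div_comm, ← Real.rpow_add hs',
        div_le_iff₀ hAB] at g1
      have e1 : (p-1)*a + (q-1)*b = a*p + b*q - 1 := by linear_combination (-1) * hab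
      rw [e1] at g1
      have g2 := mul_le_mul_of_nonneg_right g1 (h.hpos s hs i)
      refine g2.trans (le_of_eq ?_)
      simp only [Pi.add_apply]
      ring
    have h2 : ∫ s in Ioi 0, (A^a * B^b * (a/A) * (s^(p-1) * Ψ s i)
        + A^a * B^b * (b/B) * (s^(q-1) * Ψ s i)) = A^a * B^b * (a/A) * A + A^a * B^b * (b/B) * B := by
      rw [integral_add i1 i2, integral_const_mul, integral_const_mul]; rfl
    rw [h2] at h1
    refine h1.trans (le_of_eq ?_)
    have : A^a * B^b * (a/A) * A + A^a * B^b * (b/B) * B = A^a * B^b * (a + b) := by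
      field_simp
    rw [this, hab, mul_one]
  calc Real.log (KK Ψ i (a*p + b*q)) ≤ Real.log (A^a * B^b) :=
        Real.log_le_log (h.KK_pos i _ hm) hle
    _ = a * Real.log A + b * Real.log B := by
        rw [Real.log_mul (by positivity) (by positivity), Real.log_rpow hA, Real.log_rpow hB]

end MData

theorem incr_bounds (u ℓ : ℝ → ℝ) (hu : ConvexOn ℝ (Ioi 0) u)
    (hr : ∀ x, 0 < x → u (x+4) - u x = ℓ x) (x t : ℝ) (hx : 0 < x) (ht : 0 < t) (ht4 : t ≤ 4) :
    t/4 * ℓ x ≤ u (x+4+t) - u (x+4) ∧ u (x+4+t) - u (x+4) ≤ t/4 * ℓ (x+4) := by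
  constructor
  · have h1 := hu.slope_mono_adjacent (x := x) (y := x+4) (z := x+4+t) hx
      (show 0 < x+4+t by linarith) (by linarith) (by linarith)
    rw [hr x hx, show x+4-x = 4 by ring, show x+4+t-(x+4) = t by ring, le_div_iff₀ ht] at h1
    linarith
  · have h1 := hu.secant_mono (a := x+4) (x := x+4+t) (y := x+4+4) (show 0 < x+4 by linarith)
      (show 0 < x+4+t by linarith) (show 0 < x+4+4 by linarith) (by intro h; linarith)
      (by intro h; linarith) (by linarith)
    rw [hr (x+4) (by linarith), show x+4+4-(x+4) = 4 by ring, show x+4+t-(x+4) = t by ring,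
      div_le_iff₀ ht] at h1
    linarith

theorem bm_unique (u v ℓ : ℝ → ℝ) (hu : ConvexOn ℝ (Ioi 0) u) (hv : ConvexOn ℝ (Ioi 0) v)
    (hru : ∀ x, 0 < x → u (x+4) - u x = ℓ x) (hrv : ∀ x, 0 < x → v (x+4) - v x = ℓ x)
    (hℓ : Tendsto (fun x => ℓ (x+4) - ℓ x) atTop (𝓝 0)) (p t : ℝ) (hp : 0 < p) (ht : 0 < t)
    (ht4 : t ≤ 4) : u (p+t) - u p = v (p+t) - v p := by
  have per : ∀ x, 0 < x → ∀ n : ℕ, u (x + 4*n) - v (x+4*n) = u x - v x := by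
    intro x hx n
    induction n with
    | zero => simp
    | succ k ih =>
      have hk : 0 < x + 4*(k:ℝ) := by positivity
      have e : x + 4 * ((k+1 : ℕ) : ℝ) = x + 4*k + 4 := by push_cast; ring
      have h1 := hru _ hk
      have h2 := hrv _ hk
      rw [e]; linarith
  have hb : ∀ n : ℕ, |(u (p+t) - u p) - (v (p+t) - v p)| ≤ t/4 * (ℓ (p + 4*n + 4) - ℓ (p+4*n)) := by
    intro n
    have hk : 0 < p + 4*(n:ℝ) := by positivity
    obtain ⟨a1, a2⟩ := incr_bounds u ℓ hu hru _ t hk ht ht4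
    obtain ⟨b1, b2⟩ := incr_bounds v ℓ hv hrv _ t hk ht ht4
    have q1 := per p hp (n+1)
    have q2 := per (p+t) (by linarith) (n+1)
    have e1 : p + 4 * ((n+1 : ℕ) : ℝ) = p + 4*n + 4 := by push_cast; ring
    have e2 : p + t + 4 * ((n+1 : ℕ) : ℝ) = p + 4*n + 4 + t := by push_cast; ring
    rw [e1] at q1
    rw [e2] at q2
    rw [abs_le]
    constructor <;> linarith
  have hn : Tendsto (fun n : ℕ => p + 4*(n:ℝ)) atTop atTop :=
    tendsto_atTop_add_const_left _ _ (tendsto_natCast_atTop_atTop.const_mul_atTop (by norm_num))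
  have hl : Tendsto (fun n : ℕ => t/4 * (ℓ (p + 4*n + 4) - ℓ (p+4*n))) atTop (𝓝 0) := by
    simpa using (hℓ.comp hn).const_mul (t/4)
  have := ge_of_tendsto' hl hb
  have := abs_eq_zero.1 (le_antisymm this (abs_nonneg _))
  linarith

theorem log_shift_tendsto (c : ℝ) :
    Tendsto (fun x : ℝ => Real.log (x + 4 + c) - Real.log (x + c)) atTop (𝓝 0) := by
  have h1 : Tendsto (fun x : ℝ => 1 + 4/(x+c)) atTop (𝓝 (1+0)) :=
    tendsto_const_nhds.add (tendsto_const_nhds.div_atTop (tendsto_atTop_add_const_right _ _ tendsto_id))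
  have h2 := (Real.continuousAt_log (show (1:ℝ)+0 ≠ 0 by norm_num)).tendsto.comp h1
  simp only [add_zero, Real.log_one] at h2
  refine h2.congr' ?_
  filter_upwards [eventually_gt_atTop (-c), eventually_gt_atTop (-c-4)] with x hx hx'
  have : 0 < x + c := by linarith
  simp only [Function.comp]
  rw [← Real.log_div (by linarith) (by linarith)]
  congr 1
  field_simp; ring

/-- the explicit solution of the Mellin recursion, logarithm -/
noncomputable def gg (c : Fin 4 → ℝ) (p : ℝ) : ℝ :=
  p * Real.log 4 + ∑ j, Real.log (Real.Gamma ((p + c j)/4))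

noncomputable def ell (c : Fin 4 → ℝ) (p : ℝ) : ℝ := ∑ j, Real.log (p + c j)

theorem ell_tendsto (c : Fin 4 → ℝ) : Tendsto (fun x => ell c (x+4) - ell c x) atTop (𝓝 0) := by
  simp only [ell, ← Finset.sum_sub_distrib]
  simpa using tendsto_finsetSum Finset.univ fun j _ => log_shift_tendsto (c j)

theorem gg_convex (c : Fin 4 → ℝ) (hc : ∀ j, 0 ≤ c j) : ConvexOn ℝ (Ioi 0) (gg c) := by
  refine ⟨convex_Ioi 0, fun p hp q hq a b ha hb hab => ?_⟩
  have hp' : (0:ℝ) < p := hp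
  have hq' : (0:ℝ) < q := hq
  simp only [smul_eq_mul, gg]
  have : ∀ j, Real.log (Real.Gamma ((a*p+b*q + c j)/4)) ≤
      a * Real.log (Real.Gamma ((p + c j)/4)) + b * Real.log (Real.Gamma ((q + c j)/4)) := by
    intro j
    have h1 := Real.convexOn_log_Gamma.2 (show (p + c j)/4 ∈ Ioi 0 from by
        have := hc j; rw [mem_Ioi]; positivity)
      (show (q + c j)/4 ∈ Ioi 0 from by have := hc j; rw [mem_Ioi]; positivity) ha hb hab
    simp only [smul_eq_mul, Function.comp] at h1
    rwa [show a * ((p + c j)/4) + b * ((q+c j)/4) = (a*p+b*q + c j)/4 by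
      linear_combination (c j)/4 * hab] at h1
  have := Finset.sum_le_sum fun j (_ : j ∈ Finset.univ) => this j
  rw [Finset.sum_add_distrib, ← Finset.mul_sum, ← Finset.mul_sum] at this
  linarith

theorem gg_rec (c : Fin 4 → ℝ) (hc : ∀ j, 0 ≤ c j) (p : ℝ) (hp : 0 < p) :
    gg c (p+4) - gg c p = ell c p := by
  have : ∀ j, Real.log (Real.Gamma ((p + 4 + c j)/4)) =
      Real.log (p + c j) - Real.log 4 + Real.log (Real.Gamma ((p + c j)/4)) := by
    intro j
    have h0 : 0 < p + c j := by have := hc j; linarith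
    rw [show (p+4+c j)/4 = (p + c j)/4 + 1 by ring, Real.Gamma_add_one (by positivity),
      Real.log_mul (by positivity) (Real.Gamma_pos_of_pos (by positivity)).ne',
      Real.log_div h0.ne' (by norm_num)]
  simp only [gg, ell, this, Finset.sum_add_distrib, Finset.sum_sub_distrib]
  simp
  ring

/-- the shifts -/
noncomputable def cc (γ : Fin 4 → ℝ) : Fin 4 → ℝ :=
  ![0, aa γ 0, aa γ 0 + aa γ 3, aa γ 0 + aa γ 3 + aa γ 2]

theorem MData.cc_nonneg {γ D : Fin 4 → ℝ} {Ψ : ℝ → Fin 4 → ℝ} (h : MData γ Ψ D) (j : Fin 4) :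
    0 ≤ cc γ j := by
  have h0 := h.ha 0
  have h1 := h.ha 3
  have h2 := h.ha 2
  fin_cases j <;> simp [cc] <;> linarith

theorem aa_sum (γ : Fin 4 → ℝ) : aa γ 0 + aa γ 3 + aa γ 2 + aa γ 1 = 4 := by
  have e0 : (0:Fin 4) - 1 = 3 := by decide
  have e1 : (1:Fin 4) - 1 = 0 := by decide
  have e2 : (2:Fin 4) - 1 = 1 := by decide
  have e3 : (3:Fin 4) - 1 = 2 := by decide
  simp only [aa, e0, e1, e2, e3]; ring

theorem MData.K0_rec {γ D : Fin 4 → ℝ} {Ψ : ℝ → Fin 4 → ℝ} (h : MData γ Ψ D) (p : ℝ) (hp : 0 < p) :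
    Real.log (KK Ψ 0 (p+4)) - Real.log (KK Ψ 0 p) = ell (cc γ) p := by
  have h0 := h.ha 0
  have h3 := h.ha 3
  have h2 := h.ha 2
  have r0 := h.KK_rec 0 p hp
  have r3 := h.KK_rec 3 (p + aa γ 0) (by linarith)
  have r2 := h.KK_rec 2 (p + aa γ 0 + aa γ 3) (by linarith)
  have r1 := h.KK_rec 1 (p + aa γ 0 + aa γ 3 + aa γ 2) (by linarith)
  rw [show (0:Fin 4) - 1 = 3 by decide] at r0
  rw [show (3:Fin 4) - 1 = 2 by decide] at r3
  rw [show (2:Fin 4) - 1 = 1 by decide] at r2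
  rw [show (1:Fin 4) - 1 = 0 by decide] at r1
  rw [show p + aa γ 0 + aa γ 3 + aa γ 2 + aa γ 1 = p + 4 by linear_combination aa_sum γ] at r1
  rw [← r1, ← r2, ← r3, ← r0]
  have k0 := h.KK_pos 0 p hp
  rw [Real.log_mul (by linarith) (by positivity), Real.log_mul (by linarith) (by positivity),
    Real.log_mul (by linarith) (by positivity), Real.log_mul (by linarith) (by positivity)]
  simp [ell, cc, Fin.sum_univ_four, ← add_assoc]
  ring

theorem MData.K0_diff {γ D : Fin 4 → ℝ} {Ψ : ℝ → Fin 4 → ℝ} (h : MData γ Ψ D) (p t : ℝ)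
    (hp : 0 < p) (ht : 0 < t) (ht4 : t ≤ 4) :
    Real.log (KK Ψ 0 (p+t)) - Real.log (KK Ψ 0 p) = gg (cc γ) (p+t) - gg (cc γ) p :=
  bm_unique _ _ (ell (cc γ)) (h.KK_logconvex 0) (gg_convex _ h.cc_nonneg) h.K0_rec
    (gg_rec _ h.cc_nonneg) (ell_tendsto _) p t hp ht ht4

theorem log_Gamma_one_add (x : ℝ) (hx : 0 < x) :
    Real.log (Real.Gamma (x/4 + 1)) = Real.log x - Real.log 4 + Real.log (Real.Gamma (x/4)) := by
  rw [Real.Gamma_add_one (by positivity),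
      Real.log_mul (by positivity) (Real.Gamma_pos_of_pos (by positivity)).ne',
      Real.log_div hx.ne' (by norm_num)]

theorem MData.log_rec {γ D : Fin 4 → ℝ} {Ψ : ℝ → Fin 4 → ℝ} (h : MData γ Ψ D) (i : Fin 4) (p : ℝ)
    (hp : 0 < p) : Real.log (KK Ψ i p) = Real.log (KK Ψ (i-1) (p + aa γ i)) - Real.log p := by
  rw [← h.KK_rec i p hp, Real.log_mul hp.ne' (h.KK_pos i p hp).ne']; ring

theorem MData.D_pos {γ D : Fin 4 → ℝ} {Ψ : ℝ → Fin 4 → ℝ} (h : MData γ Ψ D) (i : Fin 4) :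
    0 < D i := by rw [h.D_eq]; exact h.KK_pos _ _ (h.ha i)

theorem final_consts (γ0 γ1 L0 L1 : ℝ) (w : ℝ → Fin 4 → ℝ) (v : ℝ → Fin 4 → ℝ)
    (h : TTData ![γ0, γ1, -γ1, -γ0] ![L0, L1, -L1, -L0] w v) (hγ0 : -1 < γ0) (hγ1 : γ1 < 1)
    (hγ : γ1 > γ0 - 2) :
    L0 = -Real.log ((2:ℝ) ^ (2 * γ0) *
      (Real.Gamma ((1 + γ0)/4) * Real.Gamma ((4 + γ0 + γ1)/8) * Real.Gamma ((6 + γ0 - γ1)/8)) /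
      (Real.Gamma ((3 - γ0)/4) * Real.Gamma ((4 - γ0 - γ1)/8) * Real.Gamma ((2 - γ0 + γ1)/8))) ∧
    L1 = -Real.log ((2:ℝ) ^ (2 * γ1) *
      (Real.Gamma ((3 + γ1)/4) * Real.Gamma ((4 + γ0 + γ1)/8) * Real.Gamma ((2 - γ0 + γ1)/8)) /
      (Real.Gamma ((1 - γ1)/4) * Real.Gamma ((4 - γ0 - γ1)/8) * Real.Gamma ((6 + γ0 - γ1)/8))) := by
  obtain ⟨Ψ, D, hd, hl, hp, hD0, hD, hs⟩ := h.limit_system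
  have M : MData ![γ0, γ1, -γ1, -γ0] Ψ D := ⟨h.aa_pos, hd, hl, hp, hD0, hD⟩
  set γ : Fin 4 → ℝ := ![γ0, γ1, -γ1, -γ0] with hγdef
  have e0 : (0:Fin 4) - 1 = 3 := by decide
  have e1 : (1:Fin 4) - 1 = 0 := by decide
  have e2 : (2:Fin 4) - 1 = 1 := by decide
  have e3 : (3:Fin 4) - 1 = 2 := by decide
  obtain ⟨a, ha⟩ : ∃ a, a = 1 + γ0 := ⟨_, rfl⟩
  obtain ⟨b, hb⟩ : ∃ b, b = 1 + (γ1 - γ0)/2 := ⟨_, rfl⟩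
  obtain ⟨c, hc⟩ : ∃ c, c = 1 - γ1 := ⟨_, rfl⟩
  have a0 : aa γ 0 = a := by simp [aa, e0, hγdef, ha]
  have a1 : aa γ 1 = b := by simp [aa, e1, hγdef, hb]
  have a2 : aa γ 2 = c := by simp [aa, e2, hγdef, hc]; ring
  have a3 : aa γ 3 = b := by simp [aa, e3, hγdef, hb]; ring
  have ap : 0 < a := by linarith
  have bp : 0 < b := by linarith
  have cp : 0 < c := by linarith
  have habc : a + 2*b + c = 4 := by rw [ha, hb, hc]; ring
  have D0 := M.D_eq 0
  have D1 := M.D_eq 1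
  have D2 := M.D_eq 2
  have D3 := M.D_eq 3
  rw [e0, a0] at D0
  rw [e1, a1] at D1
  rw [e2, a2] at D2
  rw [e3, a3] at D3
  have s0 := congrArg Real.log (hs 0)
  have s1 := congrArg Real.log (hs 1)
  rw [show (3:Fin 4) - 0 = 3 by decide, Real.log_mul (M.D_pos _).ne' (Real.exp_pos _).ne',
    Real.log_mul (M.D_pos _).ne' (Real.exp_pos _).ne', Real.log_exp, Real.log_exp, D3, D0] at s0
  rw [show (3:Fin 4) - 1 = 2 by decide, Real.log_mul (M.D_pos _).ne' (Real.exp_pos _).ne',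
    Real.log_mul (M.D_pos _).ne' (Real.exp_pos _).ne', Real.log_exp, Real.log_exp, D2, D1] at s1
  simp at s0 s1
  have l1 := M.log_rec 1 c cp
  have l2 := M.log_rec 2 b bp
  have l3 := M.log_rec 1 (b+c) (by positivity)
  have l4 := M.log_rec 3 a ap
  have l5 := M.log_rec 2 (a+b) (by positivity)
  have l6 := M.log_rec 1 (a+b+c) (by positivity)
  rw [e1, a1] at l1 l3 l6
  rw [e2, a2] at l2 l5
  rw [e3, a3] at l4
  have f1 := M.K0_diff b c bp cp (by linarith)
  have f2 := M.K0_diff (b+c+b) a (by positivity) ap (by linarith)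
  rw [show b+c+b+a = a+b+c+b by ring] at f2
  rw [show c+b = b+c by ring] at l1
  have c0 : cc γ 0 = 0 := by simp [cc]
  have c1 : cc γ 1 = a := by simp [cc, a0]
  have c2 : cc γ 2 = a + b := by simp [cc, a0, a3]
  have c3 : cc γ 3 = a + b + c := by simp [cc, a0, a2, a3]
  simp only [gg, Fin.sum_univ_four, c0, c1, c2, c3, add_zero] at f1 f2
  -- rewrite the arguments
  rw [show (b + c + a)/4 = (a+b+c)/4 by ring, show (b+c+(a+b))/4 = 1 by linear_combination habc/4,
    show (b+c+(a+b+c))/4 = c/4+1 by linear_combination habc/4, show (b+a)/4 = (a+b)/4 by ring,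
    show (b+(a+b))/4 = (a+2*b)/4 by ring, show (b+(a+b+c))/4 = 1 by linear_combination habc/4,
    log_Gamma_one_add c cp] at f1
  rw [show (a+b+c+b)/4 = 1 by linear_combination habc/4,
    show (a+b+c+b+a)/4 = a/4+1 by linear_combination habc/4,
    show (a+b+c+b+(a+b))/4 = (a+b)/4+1 by linear_combination habc/4,
    show (a+b+c+b+(a+b+c))/4 = (a+b+c)/4+1 by linear_combination habc/4,
    show (b+c+b)/4 = (4-a)/4 by linear_combination habc/4,
    show (b+c+b+a)/4 = 1 by linear_combination habc/4,
    show (b+c+b+(a+b))/4 = b/4+1 by linear_combination habc/4,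
    show (b+c+b+(a+b+c))/4 = (b+c)/4+1 by linear_combination habc/4,
    log_Gamma_one_add a ap, log_Gamma_one_add b bp, log_Gamma_one_add (a+b) (by positivity),
    log_Gamma_one_add (b+c) (by positivity), log_Gamma_one_add (a+b+c) (by positivity)] at f2
  rw [show (1+γ0)/4 = a/4 by rw [ha], show (4+γ0+γ1)/8 = (a+b)/4 by rw [ha, hb]; ring,
    show (6+γ0-γ1)/8 = (a+b+c)/4 by rw [ha, hb, hc]; ring,
    show (3-γ0)/4 = (4-a)/4 by rw [ha]; ring,
    show (4-γ0-γ1)/8 = (b+c)/4 by rw [hb, hc]; ring,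
    show (2-γ0+γ1)/8 = b/4 by rw [hb]; ring,
    show (3+γ1)/4 = (a+2*b)/4 by rw [ha, hb]; ring,
    show (1-γ1)/4 = c/4 by rw [hc]]
  have G : ∀ x : ℝ, 0 < x → Real.Gamma (x/4) ≠ 0 := fun x hx =>
    (Real.Gamma_pos_of_pos (by positivity)).ne'
  have g1 := G a ap
  have g2 := G b bp
  have g3 := G c cp
  have g4 := G (a+b) (by positivity)
  have g5 := G (b+c) (by positivity)
  have g6 := G (a+b+c) (by positivity)
  have g7 := G (a+2*b) (by positivity)
  have g8 := G (4-a) (by linarith)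
  have two : ∀ y : ℝ, (2:ℝ)^y ≠ 0 := fun y => (Real.rpow_pos_of_pos two_pos y).ne'
  have log4 : Real.log 4 = 2 * Real.log 2 := by
    rw [show (4:ℝ) = 2^2 by norm_num, Real.log_pow]; norm_num
  have lg : ∀ y X1 X2 X3 Y1 Y2 Y3 : ℝ, X1 ≠ 0 → X2 ≠ 0 → X3 ≠ 0 → Y1 ≠ 0 → Y2 ≠ 0 → Y3 ≠ 0 →
      Real.log ((2:ℝ)^(2*y) * (X1*X2*X3)/(Y1*Y2*Y3)) = y * Real.log 4 + (Real.log X1 + Real.log X2 + Real.log X3) -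
        (Real.log Y1 + Real.log Y2 + Real.log Y3) := by
    intro y X1 X2 X3 Y1 Y2 Y3 h1 h2 h3 h4 h5 h6
    rw [Real.log_div (mul_ne_zero (two _) (by simp [*])) (by simp [*]),
      Real.log_mul (two _) (by simp [*]), Real.log_mul (by simp [*]) h3, Real.log_mul h1 h2,
      Real.log_mul (by simp [*]) h6, Real.log_mul h4 h5, Real.log_rpow two_pos, log4]
    ring
  rw [lg _ _ _ _ _ _ _ g1 g4 g6 g8 g5 g2, lg _ _ _ _ _ _ _ g7 g4 g2 g3 g5 g6]
  have hc' : c * Real.log 4 = Real.log 4 - γ1 * Real.log 4 := by rw [hc]; ring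
  have ha' : a * Real.log 4 = Real.log 4 + γ0 * Real.log 4 := by rw [ha]; ring
  constructor
  · linarith
  · linarith

end Helpers

/-- Fine structure near `r = 0` in the generic case: for a smooth solution of the radial
tt* system (case 4a) with asymptotic data `(γ0, γ1)` in the open triangle,
`2 wi(r) − γi ln r` converges as `r → 0⁺` to the explicit constants `ρi` built from
Gamma values. -/
theorem fine_structure_generic_case (γ0 γ1 : ℝ)
    (hγ0 : -1 < γ0) (hγ1 : γ1 < 1) (hγ : γ1 > γ0 - 2)
    (w0 w1 : ℝ → ℝ)
    (hsmooth0 : ContDiffOn ℝ (⊤ : ℕ∞) w0 (Set.Ioi 0)) (hsmooth1 : ContDiffOn ℝ (⊤ : ℕ∞) w1 (Set.Ioi 0))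
    (hsol : IsRadialTTStar w0 w1)
    (hlim0 : Tendsto w0 atTop (nhds 0)) (hlim1 : Tendsto w1 atTop (nhds 0))
    (hγ0lim : Tendsto (fun r => 2 * w0 r / Real.log r) (nhdsWithin 0 (Set.Ioi 0)) (nhds γ0))
    (hγ1lim : Tendsto (fun r => 2 * w1 r / Real.log r) (nhdsWithin 0 (Set.Ioi 0)) (nhds γ1))
    (ρ0 ρ1 : ℝ)
    (hρ0 : ρ0 = -Real.log ((2:ℝ) ^ (2 * γ0) *
      (Real.Gamma ((1 + γ0)/4) * Real.Gamma ((4 + γ0 + γ1)/8) * Real.Gamma ((6 + γ0 - γ1)/8)) /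
      (Real.Gamma ((3 - γ0)/4) * Real.Gamma ((4 - γ0 - γ1)/8) * Real.Gamma ((2 - γ0 + γ1)/8))))
    (hρ1 : ρ1 = -Real.log ((2:ℝ) ^ (2 * γ1) *
      (Real.Gamma ((3 + γ1)/4) * Real.Gamma ((4 + γ0 + γ1)/8) * Real.Gamma ((2 - γ0 + γ1)/8)) /
      (Real.Gamma ((1 - γ1)/4) * Real.Gamma ((4 - γ0 - γ1)/8) * Real.Gamma ((6 + γ0 - γ1)/8)))) :
    Tendsto (fun r => 2 * w0 r - γ0 * Real.log r) (nhdsWithin 0 (Set.Ioi 0)) (nhds ρ0) ∧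
    Tendsto (fun r => 2 * w1 r - γ1 * Real.log r) (nhdsWithin 0 (Set.Ioi 0)) (nhds ρ1) := by
  obtain ⟨L0, L1, w, v, h, h0, h1⟩ := ttdata_exists γ0 γ1 hγ0 hγ1 hγ w0 w1 hsmooth0 hsmooth1 hsol
    hlim0 hlim1 hγ0lim hγ1lim
  obtain ⟨e0, e1⟩ := final_consts γ0 γ1 L0 L1 w v h hγ0 hγ1 hγ
  rw [hρ0, hρ1, ← e0, ← e1]
  exact ⟨h0, h1⟩
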